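/- arXiv:math/0605104 — 3 statements merged into one kernel-verified Lean document; each statement's English description precedes it below -/
import Mathlib

section
/- For every n ≥ 1, the number of reduced semilinear n-quasigroups of order 4 equals 3·2^(2^n − n − 1) − 2. -/
/-- The alphabet `Σ = {0,1,2,3}`. -/
abbrev V4 := Fin 4

/-- An `n`-quasigroup of order 4: for every point, index and value there is
exactly one way to complete along the line. -/
def IsNQuasigroup {n : ℕ} (f : (Fin n → V4) → V4) : Prop :=
  ∀ (a : Fin n → V4) (i : Fin n) (b : V4),
    ∃! x : V4, f (Function.update a i x) = b

/-- A reduced `n`-quasigroup: `f(0,…,0,a,0,…,0) = a`. -/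
def IsReducedQ {n : ℕ} (f : (Fin n → V4) → V4) : Prop :=
  ∀ (i : Fin n) (a : V4), f (Function.update (fun _ => 0) i a) = a

/-- `S_{a,b}(f)`. -/
def SCode {n : ℕ} (f : (Fin n → V4) → V4) (a b : V4) : Set (Fin n → V4) :=
  {x | f x = a ∨ f x = b}

/-- A linear double-code: `χ_S(x₁,…,xₙ) = χ_{S₁}(x₁) ⊕ ⋯ ⊕ χ_{Sₙ}(xₙ)`
for some two-element subsets `Sᵢ ⊆ Σ`. -/
def IsLinearDoubleCode {n : ℕ} (S : Set (Fin n → V4)) : Prop :=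
  ∃ T : Fin n → Finset V4, (∀ i, (T i).card = 2) ∧
    ∀ x : Fin n → V4, x ∈ S ↔ (∑ i, if x i ∈ T i then (1 : ZMod 2) else 0) = 1

/-- A semilinear `n`-quasigroup: `S_{a,b}(f)` is a linear double-code
for some `a ≠ b`. -/
def IsSemilinear {n : ℕ} (f : (Fin n → V4) → V4) : Prop :=
  ∃ a b : V4, a ≠ b ∧ IsLinearDoubleCode (SCode f a b)

namespace SL

def p : Fin 3 → V4 → ZMod 2 := ![![0,0,1,1], ![0,1,0,1], ![0,1,1,0]]

theorem p_zero (c) : p c 0 = 0 := by revert c; decide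

theorem p_inj : ∀ c d : Fin 3, c ≠ d → ∀ u v : V4, p c u = p c v → p d u = p d v → u = v := by
  decide

theorem ne_succ (c : Fin 3) : c ≠ c + 1 := by revert c; decide

/-- inverse of `(p c, p (c+1))` -/
def q (c : Fin 3) (s t : ZMod 2) : V4 :=
  (![![![0, 1], ![2, 3]], ![![0, 2], ![3, 1]], ![![0, 3], ![1, 2]]] : Fin 3 → Fin 2 → Fin 2 → V4) c s t

theorem p_q : ∀ c s t, p c (q c s t) = s := by decide
theorem p_q' : ∀ c s t, p (c+1) (q c s t) = t := by decide

theorem z2 : ∀ a b : ZMod 2, (a = 1 ↔ b = 1) → a = b := by decide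
theorem z2add (a : ZMod 2) : a + a = 0 := by revert a; decide

theorem pair_exists : ∀ a b : V4, a ≠ b → ∃ c : Fin 3, ∃ e : ZMod 2,
    ∀ v : V4, (v = a ∨ v = b) ↔ p c v + e = 1 := by decide

theorem pair_of : ∀ c : Fin 3, ∃ a b : V4, a ≠ b ∧ ∀ v : V4, (v = a ∨ v = b) ↔ p c v = 1 := by
  decide

theorem card_T : ∀ c : Fin 3, (Finset.univ.filter (fun v => p c v = 1)).card = 2 := by decide

theorem q_zero : ∀ c, q c 0 0 = 0 := by decide

variable {n : ℕ}

def F (c : Fin 3) (l : (Fin n → ZMod 2) → ZMod 2) (x : Fin n → V4) : V4 :=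
  q c (∑ i, p c (x i)) (∑ i, p (c+1) (x i) + l (fun i => p c (x i)))

theorem sum_upd (g : V4 → ZMod 2) (a : Fin n → V4) (i : Fin n) (x : V4) :
    ∑ j, g (Function.update a i x j) = g x + ∑ j ∈ Finset.univ \ {i}, g (a j) := by
  have h := Finset.sum_update_of_mem (Finset.mem_univ i) (fun j => g (a j)) (g x)
  rw [← h]
  refine Finset.sum_congr rfl fun j _ => ?_
  by_cases hj : j = i
  · subst hj; simp
  · simp [hj]

theorem F_quasi (c : Fin 3) (l : (Fin n → ZMod 2) → ZMod 2) : IsNQuasigroup (F c l) := by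
  intro a i b
  have inj : Function.Injective (fun x => F c l (Function.update a i x)) := by
    intro x y h
    simp only at h
    have h1 := congrArg (p c) h
    have h2 := congrArg (p (c+1)) h
    simp only [F, p_q, p_q'] at h1 h2
    rw [sum_upd, sum_upd] at h1
    have h1 := add_right_cancel h1
    have e : (fun j => p c (Function.update a i x j)) =
        (fun j => p c (Function.update a i y j)) := by
      funext j
      by_cases hj : j = i
      · subst hj; simpa using h1
      · simp [hj]
    rw [e, sum_upd, sum_upd] at h2
    exact p_inj c (c+1) (ne_succ c) _ _ h1 (add_right_cancel (add_right_cancel h2))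
  exact (Finite.injective_iff_bijective.1 inj).existsUnique b

theorem F_semi (c : Fin 3) (l : (Fin n → ZMod 2) → ZMod 2) : IsSemilinear (F c l) := by
  obtain ⟨a, b, hab, h⟩ := pair_of c
  refine ⟨a, b, hab, fun _ => Finset.univ.filter (fun v => p c v = 1), fun _ => card_T c, ?_⟩
  intro x
  have : ∀ v : V4, (if v ∈ Finset.univ.filter (fun v => p c v = 1) then (1 : ZMod 2) else 0) = p c v := by
    clear * -
    revert c; decide
  simp only [this]
  show (F c l x = a ∨ F c l x = b) ↔ _
  rw [h, F, p_q]

def E (n : ℕ) : Finset (Fin n → ZMod 2) :=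
  insert 0 (Finset.univ.image (fun i => Pi.single i 1))

def Lam (n : ℕ) : Finset ((Fin n → ZMod 2) → ZMod 2) :=
  Fintype.piFinset (fun y => if y ∈ E n then {0} else Finset.univ)

theorem mem_Lam (l : (Fin n → ZMod 2) → ZMod 2) : l ∈ Lam n ↔ ∀ y ∈ E n, l y = 0 := by
  simp only [Lam, Fintype.mem_piFinset]
  refine forall_congr' fun y => ?_
  by_cases h : y ∈ E n <;> simp [h]

theorem card_E : (E n).card = n + 1 := by
  rw [E, Finset.card_insert_of_notMem, Finset.card_image_of_injective]
  · simp
  · intro i j h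
    by_contra hij
    have := congrFun h i
    simp [Pi.single_apply, hij] at this
  · simp

theorem card_Lam : (Lam n).card = 2 ^ (2 ^ n - n - 1) := by
  rw [Lam, Fintype.card_piFinset]
  have : ∀ y : Fin n → ZMod 2, (if y ∈ E n then ({0} : Finset (ZMod 2)) else Finset.univ).card
      = if y ∈ E n then 1 else 2 := by
    intro y; split_ifs <;> simp
  simp only [this]
  rw [Finset.prod_ite]
  simp only [Finset.prod_const_one, one_mul, Finset.prod_const]
  congr 1
  have : Finset.univ.filter (fun y => y ∉ E n) = (E n)ᶜ := by ext; simp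
  rw [this, Finset.card_compl, card_E]
  simp [Nat.sub_sub]

theorem axis (c : Fin 3) (i : Fin n) (a : V4) :
    (fun j => p c (Function.update (fun _ => (0:V4)) i a j)) = Pi.single i (p c a) := by
  funext j
  by_cases hj : j = i
  · subst hj; simp
  · simp [hj, p_zero]

theorem single_mem (i : Fin n) (a : ZMod 2) : Pi.single i a ∈ E n := by
  have : a = 0 ∨ a = 1 := by revert a; decide
  rcases this with rfl | rfl <;> simp [E]

theorem F_red (c : Fin 3) (l) (hl : l ∈ Lam n) : IsReducedQ (F c l) := by
  intro i a
  rw [mem_Lam] at hl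
  have hs : ∀ d, ∑ j, p d (Function.update (fun _ => (0:V4)) i a j) = p d a := by
    intro d; rw [sum_upd]; simp [p_zero]
  refine p_inj c (c+1) (ne_succ c) _ _ ?_ ?_
  · rw [F, p_q, hs]
  · rw [F, p_q', hs, axis, hl _ (single_mem _ _), add_zero]

theorem F_inj (c : Fin 3) : Function.Injective (F (n := n) c) := by
  intro l m h
  funext y
  have h2 := congrArg (p (c+1)) (congrFun h (fun i => q c (y i) 0))
  simp only [F, p_q', p_q] at h2
  exact add_left_cancel h2

theorem semi_p (hn : 1 ≤ n) (f : (Fin n → V4) → V4) (hs : IsSemilinear f) (hr : IsReducedQ f) :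
    ∃ c, ∀ x, p c (f x) = ∑ i, p c (x i) := by
  obtain ⟨a, b, hab, T, -, hT⟩ := hs
  obtain ⟨c, e, hc⟩ := pair_exists a b hab
  refine ⟨c, ?_⟩
  set χ : Fin n → V4 → ZMod 2 := fun i v => if v ∈ T i then 1 else 0 with hχ
  have key : ∀ x, p c (f x) + e = ∑ i, χ i (x i) := by
    intro x
    apply z2
    rw [← hc, ← hT x]; rfl
  have ax : ∀ i v, p c v + e = χ i v + ∑ j ∈ Finset.univ \ {i}, χ j 0 := by
    intro i v
    have h := key (Function.update (fun _ => 0) i v)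
    rw [hr i v] at h
    rw [h, ← Finset.sum_update_of_mem (Finset.mem_univ i) (fun j => χ j 0)]
    refine Finset.sum_congr rfl fun j _ => ?_
    by_cases hj : j = i
    · subst hj; simp
    · simp [hj]
  have ax2 : ∀ i v, p c v = χ i v - χ i 0 := by
    intro i v
    have h1 := ax i v
    have h2 := ax i 0
    rw [p_zero] at h2
    linear_combination h1 - h2
  have h0 : e = ∑ i, χ i 0 := by
    have h := key (fun _ => 0)
    have h3 := hr ⟨0, hn⟩ 0
    rw [Function.update_eq_self_iff.2 rfl] at h3
    rwa [h3, p_zero, zero_add] at h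
  intro x
  rw [Finset.sum_congr rfl (fun i _ => ax2 i (x i)), Finset.sum_sub_distrib, ← key, ← h0]
  ring

theorem z2flip : ∀ c : Fin 3, ∀ u v : V4, u ≠ v → p c u = p c v →
    p (c+1) u = p (c+1) v + 1 := by decide

theorem exists_l (c : Fin 3) (f : (Fin n → V4) → V4) (hq : IsNQuasigroup f)
    (hp : ∀ x, p c (f x) = ∑ i, p c (x i)) : ∃ l, f = F c l := by
  set g : (Fin n → V4) → ZMod 2 := fun x => p (c+1) (f x) - ∑ i, p (c+1) (x i) with hg
  have step : ∀ x i v, p c v = p c (x i) → g (Function.update x i v) = g x := by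
    intro x i v hv
    by_cases hvx : v = x i
    · subst hvx; simp
    have hxx : Function.update x i (x i) = x := Function.update_eq_self i x
    have hne : f (Function.update x i v) ≠ f x := by
      intro h
      apply hvx
      exact (hq x i (f x)).unique h (by rw [hxx])
    have hpe : p c (f (Function.update x i v)) = p c (f x) := by
      rw [hp, hp, sum_upd, hv, ← sum_upd, hxx]
    have h1 := z2flip c _ _ hne hpe
    have h2 := z2flip c _ _ hvx hv
    have h3 := sum_upd (p (c+1)) x i v
    have h4 := sum_upd (p (c+1)) x i (x i)
    rw [hxx] at h4
    simp only [hg]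
    rw [h1, h3, h4, h2]
    ring
  have all : ∀ x x', (∀ i, p c (x' i) = p c (x i)) → g x' = g x := by
    intro x x' h
    have : ∀ s : Finset (Fin n), g (s.piecewise x' x) = g x := by
      intro s
      induction s using Finset.induction_on with
      | empty => simp
      | insert j s hj ih =>
        rw [Finset.piecewise_insert, step _ _ _ _, ih]
        rw [Finset.piecewise_eq_of_notMem _ _ _ hj, h]
    simpa using this Finset.univ
  refine ⟨fun y => g (fun i => q c (y i) 0), ?_⟩
  funext x
  refine p_inj c (c+1) (ne_succ c) _ _ ?_ ?_
  · rw [hp, F, p_q]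
  · rw [F, p_q', all x _ (fun i => by rw [p_q])]
    simp only [hg]; ring

theorem l_mem (c : Fin 3) (l) (hn : 1 ≤ n) (h : IsReducedQ (F (n := n) c l)) : l ∈ Lam n := by
  rw [mem_Lam]
  have key : ∀ i a, l (Pi.single i (p c a)) = 0 := by
    intro i a
    have h1 := congrArg (p (c+1)) (h i a)
    rw [F, p_q', sum_upd, axis] at h1
    simpa [p_zero] using h1
  have key' : ∀ i (t : ZMod 2), l (Pi.single i t) = 0 := by
    intro i t
    have := key i (q c t 0)
    rwa [p_q] at this
  intro y hy
  simp only [E, Finset.mem_insert, Finset.mem_image, Finset.mem_univ, true_and] at hy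
  rcases hy with rfl | ⟨i, rfl⟩
  · simpa using key' ⟨0, hn⟩ 0
  · exact key' i 1

theorem iff_F (hn : 1 ≤ n) (f : (Fin n → V4) → V4) :
    (IsNQuasigroup f ∧ IsSemilinear f ∧ IsReducedQ f) ↔ ∃ c, ∃ l ∈ Lam n, F c l = f := by
  constructor
  · rintro ⟨hq, hs, hr⟩
    obtain ⟨c, hc⟩ := semi_p hn f hs hr
    obtain ⟨l, rfl⟩ := exists_l c f hq hc
    exact ⟨c, l, l_mem c l hn hr, rfl⟩
  · rintro ⟨c, l, hl, rfl⟩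
    exact ⟨F_quasi c l, F_semi c l, F_red c l hl⟩

theorem p_third : ∀ c d : Fin 3, ∀ v, c ≠ d →  d ≠ c + 1 → p (c+1) v = p c v + p d v := by
  decide

theorem F_zero_p (c d : Fin 3) (x : Fin n → V4) : p d (F c 0 x) = ∑ i, p d (x i) := by
  by_cases h : c = d
  · subst h; rw [F, p_q]
  by_cases h' : d = c + 1
  · subst h'; rw [F, p_q']; simp
  have e : ∀ v, p d v = p c v + p (c+1) v := by
    intro v
    rw [p_third c d v h h', ← add_assoc, z2add, zero_add]
  simp only [e, Finset.sum_add_distrib]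
  rw [F, p_q, p_q']; simp

theorem F_zero_eq (c d : Fin 3) : F (n := n) c 0 = F d 0 := by
  funext x
  refine p_inj c (c+1) (ne_succ c) _ _ ?_ ?_ <;> rw [F_zero_p, F_zero_p]

theorem F_cross (c d : Fin 3) (hcd : c ≠ d) (l m) (h : F (n := n) c l = F d m) : l = 0 := by
  apply F_inj c
  funext x
  refine p_inj c d hcd _ _ ?_ ?_ <;> rw [F_zero_p]
  · rw [F, p_q]
  · rw [h, F, p_q]

theorem zero_mem : (0 : (Fin n → ZMod 2) → ZMod 2) ∈ Lam n := by
  rw [mem_Lam]; intros; rfl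

theorem main (hn : 1 ≤ n) :
    Nat.card {f : (Fin n → V4) → V4 //
        IsNQuasigroup f ∧ IsSemilinear f ∧ IsReducedQ f} =
      3 * 2 ^ (2 ^ n - n - 1) - 2 := by
  classical
  let U : Finset ((Fin n → V4) → V4) :=
    insert (F 0 0) (((Finset.univ : Finset (Fin 3)) ×ˢ ((Lam n).erase 0)).image
      (fun r => F r.1 r.2))
  have hU : ∀ f : (Fin n → V4) → V4,
      (IsNQuasigroup f ∧ IsSemilinear f ∧ IsReducedQ f) ↔ f ∈ U := by
    intro f
    rw [iff_F hn]
    simp only [U, Finset.mem_insert, Finset.mem_image, Finset.mem_product, Finset.mem_univ,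
      true_and, Finset.mem_erase, Prod.exists]
    constructor
    · rintro ⟨c, l, hl, rfl⟩
      by_cases h0 : l = 0
      · subst h0; exact Or.inl (F_zero_eq c 0)
      · exact Or.inr ⟨c, l, ⟨h0, hl⟩, rfl⟩
    · rintro (rfl | ⟨c, l, ⟨-, hl⟩, rfl⟩)
      · exact ⟨0, 0, zero_mem, rfl⟩
      · exact ⟨c, l, hl, rfl⟩
  rw [Nat.card_congr (Equiv.subtypeEquivRight hU), Nat.card_eq_fintype_card, Fintype.card_coe]
  simp only [U]
  rw [Finset.card_insert_of_notMem, Finset.card_image_of_injOn, Finset.card_product,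
    Finset.card_erase_of_mem zero_mem, card_Lam]
  · have : 0 < 2 ^ (2 ^ n - n - 1) := by positivity
    simp only [Finset.card_univ, Fintype.card_fin]
    omega
  · rintro ⟨c, l⟩ h1 ⟨d, m⟩ h2 h
    simp only [Finset.coe_product, Set.mem_prod, Finset.mem_coe, Finset.mem_erase] at h1 h2 h
    by_cases hcd : c = d
    · subst hcd
      rw [F_inj c h]
    · exact absurd (F_cross c d hcd l m h) h1.2.1
  · simp only [Finset.mem_image, Finset.mem_product, Finset.mem_erase, Prod.exists, not_exists,
      not_and]
    rintro c l ⟨-, h0, -⟩ h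
    rw [F_zero_eq 0 c] at h
    exact h0 (F_inj c h)

end SL

/-- The number of reduced semilinear `n`-quasigroups of order 4 equals
`3·2^(2^n − n − 1) − 2`. -/
theorem card_reduced_semilinear (n : ℕ) (hn : 1 ≤ n) :
    Nat.card {f : (Fin n → V4) → V4 //
        IsNQuasigroup f ∧ IsSemilinear f ∧ IsReducedQ f} =
      3 * 2 ^ (2 ^ n - n - 1) - 2 := by
  exact SL.main hn
end

section
/- Let S ⊆ Σ^n be a splittable double-MDS-code and suppose that for some k ∈ {1,…,n} and a ∈ Σ the layer L = S|_k^a is a linear double-code. Then (a) there exists b ∈ Σ such that the layer S|_k^b equals Σ^(n−1) \ L, and (b) Σ^n \ S is a splittable double-MDS-code. -/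
/-- The `k`-edge through `x`. -/
def kEdge {n : ℕ} (x : Fin n → V4) (k : Fin n) : Set (Fin n → V4) :=
  {y | ∃ a : V4, y = Function.update x k a}

/-- A (distance 2) MDS code: every edge meets it in exactly one vertex. -/
def IsMDSCode {n : ℕ} (C : Set (Fin n → V4)) : Prop :=
  ∀ (x : Fin n → V4) (k : Fin n), (kEdge x k ∩ C).ncard = 1

/-- A double-MDS-code: every edge meets it in exactly two vertices. -/
def IsDoubleMDSCode {n : ℕ} (S : Set (Fin n → V4)) : Prop :=
  ∀ (x : Fin n → V4) (k : Fin n), (kEdge x k ∩ S).ncard = 2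

/-- A set is splittable if it is the union of two disjoint MDS codes. -/
def IsSplittable {n : ℕ} (S : Set (Fin n → V4)) : Prop :=
  ∃ C₁ C₂ : Set (Fin n → V4),
    IsMDSCode C₁ ∧ IsMDSCode C₂ ∧ Disjoint C₁ C₂ ∧ S = C₁ ∪ C₂

/-- The `y`-th layer of `S ⊆ Σ^(n+1)` in direction `k`, a subset of `Σ^n`. -/
def layer {n : ℕ} (S : Set (Fin (n + 1) → V4)) (k : Fin (n + 1)) (y : V4) :
    Set (Fin n → V4) :=
  {x | k.insertNth y x ∈ S}

structure Sys (n : ℕ) (f g : (Fin n → V4) → V4) (t : Fin n → V4 → Bool)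
    (L : (Fin n → V4) → Bool) (a : V4) : Prop where
  fl : ∀ x i c d, f (Function.update x i c) = f (Function.update x i d) → c = d
  gl : ∀ x i c d, g (Function.update x i c) = g (Function.update x i d) → c = d
  ne : ∀ x, f x ≠ g x
  La : ∀ x, L x = true ↔ (f x = a ∨ g x = a)
  Lt : ∀ x i c, (L (Function.update x i c) = L x) ↔ t i c = t i (x i)

/-- the value `h`. -/
def HH {n : ℕ} (f g : (Fin n → V4) → V4) (L : (Fin n → V4) → Bool) (a : V4)
    (x : Fin n → V4) (v : V4) : Prop :=
  v ≠ a ∧ ((f x = v ∨ g x = v) ↔ L x = true)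

lemma fin_line : ∀ p q i j c : V4, p ≠ q → i ≠ j →
    ((c = i ∨ c = j) ↔ (c = p ∨ c = q)) →
    ∃ d, ((d = i ∨ d = j) ↔ (d = p ∨ d = q)) ∧
      ¬ ((d = p ∨ d = q) ↔ (c = p ∨ c = q)) := by decide

lemma fin_rest : ∀ p q : V4, p ≠ q → ∃ r s : V4, r ≠ s ∧ r ≠ p ∧ r ≠ q ∧ s ≠ p ∧ s ≠ q ∧
    ∀ c, c = p ∨ c = q ∨ c = r ∨ c = s := by decide

lemma fin_third : ∀ a u v : V4, a ≠ u → a ≠ v → u ≠ v →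
    ∃ w, w ≠ a ∧ w ≠ u ∧ w ≠ v ∧ ∀ c, c = a ∨ c = u ∨ c = v ∨ c = w := by decide

lemma fin_avoid : ∀ a u v : V4, ∃ w, w ≠ a ∧ w ≠ u ∧ w ≠ v := by decide

lemma fin_H : ∀ a p q : V4, p ≠ q → ∀ v, v ≠ a → ∀ w, w ≠ a →
    ((p = v ∨ q = v) ↔ (p = a ∨ q = a)) → ((p = w ∨ q = w) ↔ (p = a ∨ q = a)) → v = w := by
  decide

lemma fin_Hex : ∀ a p q : V4, p ≠ q → ∃ v, v ≠ a ∧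
    ((p = v ∨ q = v) ↔ (p = a ∨ q = a)) := by
  decide

lemma box_ind {n : ℕ} (t : Fin n → V4 → Bool) (R : (Fin n → V4) → Prop)
    (h : ∀ x i d, R x → t i d = t i (x i) → R (Function.update x i d))
    (x y : Fin n → V4) (hx : R x) (hxy : ∀ i, t i (y i) = t i (x i)) : R y := by
  classical
  have key : ∀ s : Finset (Fin n), R (s.piecewise y x) := by
    intro s
    induction s using Finset.induction_on with
    | empty => simpa using hx
    | insert i s hi ih =>
      rw [Finset.piecewise_insert]
      apply h _ _ _ ih
      rw [Finset.piecewise_eq_of_notMem _ _ _ hi]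
      exact hxy i
  simpa using key Finset.univ

namespace Sys
variable {n : ℕ} {f g : (Fin n → V4) → V4} {t : Fin n → V4 → Bool}
  {L : (Fin n → V4) → Bool} {a : V4}

lemma swap (h : Sys n f g t L a) : Sys n g f t L a :=
  ⟨h.gl, h.fl, fun x => (h.ne x).symm, fun x => by rw [h.La, or_comm], h.Lt⟩

lemma Huniq (h : Sys n f g t L a) {x : Fin n → V4} {v w : V4}
    (hv : HH f g L a x v) (hw : HH f g L a x w) : v = w := by
  obtain ⟨h1, h2⟩ := hv
  obtain ⟨h3, h4⟩ := hw
  rw [h.La] at h2 h4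
  exact fin_H a _ _ (h.ne x) v h1 w h3 h2 h4

lemma Hex (h : Sys n f g t L a) (x : Fin n → V4) : ∃ v, HH f g L a x v := by
  obtain ⟨v, h1, h2⟩ := fin_Hex a _ _ (h.ne x)
  exact ⟨v, h1, by rw [h.La]; exact h2⟩

lemma fsurj (h : Sys n f g t L a) (x : Fin n → V4) (i : Fin n) (v : V4) :
    ∃ c, f (Function.update x i c) = v := by
  have : Function.Injective (fun c => f (Function.update x i c)) := fun c d hcd => h.fl x i c d hcd
  exact (Finite.injective_iff_surjective.mp this) v

/-- positions of a value on a line -/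
lemma pos (h : Sys n f g t L a) (x : Fin n → V4) (i : Fin n) (v : V4) :
    ∃ p q, p ≠ q ∧ ∀ c, (f (Function.update x i c) = v ∨ g (Function.update x i c) = v) ↔
      (c = p ∨ c = q) := by
  obtain ⟨p, hp⟩ := h.fsurj x i v
  obtain ⟨q, hq⟩ := h.swap.fsurj x i v
  refine ⟨p, q, ?_, ?_⟩
  · rintro rfl
    exact h.ne _ (hp.trans hq.symm)
  · intro c
    constructor
    · rintro (hc | hc)
      · left; exact h.fl x i _ _ (hc.trans hp.symm)
      · right; exact h.gl x i _ _ (hc.trans hq.symm)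
    · rintro (rfl | rfl)
      · left; exact hp
      · right; exact hq

lemma line (h : Sys n f g t L a) {x : Fin n → V4} (i : Fin n) {v : V4}
    (hv : HH f g L a x v) : ∃ d, t i d ≠ t i (x i) ∧ HH f g L a (Function.update x i d) v := by
  obtain ⟨p, q, hpq, hp⟩ := h.pos x i a
  obtain ⟨r, s, hrs, hr⟩ := h.pos x i v
  have hx : Function.update x i (x i) = x := Function.update_eq_self i x
  obtain ⟨h1, h2⟩ := hv
  rw [h.La] at h2
  have e1 := hp (x i)
  have e2 := hr (x i)
  rw [hx] at e1 e2
  obtain ⟨d, d1, d2⟩ := fin_line p q r s (x i) hpq hrs (by rw [← e1, ← e2]; exact h2)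
  refine ⟨d, ?_, h1, ?_⟩
  · intro hd
    rw [← h.Lt x i d] at hd
    apply d2
    rw [← hp, ← e1, ← h.La, ← h.La, hd]
  · rw [h.La, hp, hr]; exact d1

lemma move (h : Sys n f g t L a) (x y : Fin n → V4) {v : V4}
    (hv : HH f g L a x v) : ∃ z, (∀ i, t i (z i) = t i (y i)) ∧ HH f g L a z v := by
  classical
  have key : ∀ s : Finset (Fin n), ∃ z, (∀ i ∈ s, t i (z i) = t i (y i)) ∧ HH f g L a z v := by
    intro s
    induction s using Finset.induction_on with
    | empty => exact ⟨x, by simp, hv⟩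
    | insert i s hi ih =>
      obtain ⟨z, hz, hzv⟩ := ih
      by_cases hzi : t i (z i) = t i (y i)
      · refine ⟨z, ?_, hzv⟩
        intro j hj
        rcases Finset.mem_insert.mp hj with rfl | hj
        · exact hzi
        · exact hz j hj
      · obtain ⟨d, hd, hdv⟩ := h.line i hzv
        refine ⟨_, ?_, hdv⟩
        intro j hj
        rcases Finset.mem_insert.mp hj with rfl | hj'
        · rw [Function.update_self]
          revert hd hzi
          cases t j d <;> cases t j (z j) <;> cases t j (y j) <;> simp
        · rw [Function.update_of_ne (by intro e; subst e; exact hi hj')]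
          exact hz j hj'
  obtain ⟨z, hz, hzv⟩ := key Finset.univ
  exact ⟨z, fun i => hz i (Finset.mem_univ i), hzv⟩

lemma toggle (h : Sys n f g t L a) (x : Fin n → V4) (i : Fin n) (d : V4) (hd : d ≠ x i) (v : V4)
    (h1 : f x = v ∨ g x = v)
    (h2 : f (Function.update x i d) = v ∨ g (Function.update x i d) = v) :
    f (Function.update x i d) = v ↔ ¬ f x = v := by
  have hx : Function.update x i (x i) = x := Function.update_eq_self i x
  have A : f (Function.update x i d) = v → ¬ f x = v := by
    intro e1 e2
    apply hd
    apply h.fl x i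
    rw [hx, e1, e2]
  have B : g (Function.update x i d) = v → ¬ g x = v := by
    intro e1 e2
    apply hd
    apply h.gl x i
    rw [hx, e1, e2]
  tauto

lemma box_L (h : Sys n f g t L a) (x y : Fin n → V4) (hxy : ∀ i, t i (y i) = t i (x i)) :
    L y = L x := by
  refine box_ind t (fun z => L z = L x) ?_ x y rfl hxy
  intro z i d hz hd
  rw [← hz]
  exact (h.Lt z i d).mpr hd

end Sys

section step
variable {n : ℕ} {f g : (Fin (n+1) → V4) → V4} {t : Fin (n+1) → V4 → Bool}
  {L : (Fin (n+1) → V4) → Bool} {a : V4}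

/-- prepend -/
def cn {n : ℕ} (c : V4) (x : Fin n → V4) : Fin (n+1) → V4 := Fin.cons c x

lemma cn_up {n : ℕ} (c : V4) (x : Fin n → V4) (i : Fin n) (d : V4) :
    cn c (Function.update x i d) = Function.update (cn c x) i.succ d := by
  simp [cn, Fin.cons_update]

lemma cn_up0 {n : ℕ} (c : V4) (x : Fin n → V4) (d : V4) :
    Function.update (cn c x) 0 d = cn d x := by
  simp [cn]

lemma cn_eta {n : ℕ} (x : Fin (n+1) → V4) : ∃ c y, x = cn c y :=
  ⟨x 0, Fin.tail x, (Fin.cons_self_tail x).symm⟩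

lemma Sys.sub (h : Sys (n+1) f g t L a) (c : V4) :
    Sys n (fun x => f (cn c x)) (fun x => g (cn c x)) (fun i => t i.succ) (fun x => L (cn c x)) a := by
  refine ⟨?_, ?_, ?_, ?_, ?_⟩
  · intro x i d e; simp only [cn_up]; exact h.fl _ _ _ _
  · intro x i d e; simp only [cn_up]; exact h.gl _ _ _ _
  · intro x; exact h.ne _
  · intro x; exact h.La _
  · intro x i d; simp only [cn_up]; rw [h.Lt]; simp [cn]

/-- blocks in direction 0. -/
structure Blk (s : V4 → Bool) (c0 c1 c2 c3 : V4) : Prop where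
  n01 : c0 ≠ c1
  n02 : c0 ≠ c2
  n03 : c0 ≠ c3
  n12 : c1 ≠ c2
  n13 : c1 ≠ c3
  n23 : c2 ≠ c3
  e01 : s c0 = s c1
  e23 : s c2 = s c3
  e02 : s c0 ≠ s c2
  all : ∀ c, c = c0 ∨ c = c1 ∨ c = c2 ∨ c = c3

lemma Blk.flip {s : V4 → Bool} {c0 c1 c2 c3 : V4} (h : Blk s c0 c1 c2 c3) : Blk s c2 c3 c0 c1 :=
  ⟨h.n23, h.n02.symm, h.n12.symm, h.n03.symm, h.n13.symm, h.n01, h.e23, h.e01, h.e02.symm,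
    fun c => by have := h.all c; tauto⟩

lemma Blk.sw {s : V4 → Bool} {c0 c1 c2 c3 : V4} (h : Blk s c0 c1 c2 c3) : Blk s c1 c0 c2 c3 :=
  ⟨h.n01.symm, h.n12, h.n13, h.n02, h.n03, h.n23, h.e01.symm, h.e23, h.e01 ▸ h.e02,
    fun c => by have := h.all c; tauto⟩

lemma Sys.exBlk (h : Sys (n+1) f g t L a) : ∃ c0 c1 c2 c3, Blk (t 0) c0 c1 c2 c3 := by
  obtain ⟨p, q, hpq, H⟩ := h.pos (fun _ => 0) 0 a
  obtain ⟨r, s, h1, h2, h3, h4, h5, h6⟩ := fin_rest p q hpq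
  have key : ∀ c d, ((c = p ∨ c = q) ↔ (d = p ∨ d = q)) ↔ t 0 c = t 0 d := by
    intro c d
    have := h.Lt (Function.update (fun _ => 0) 0 d) 0 c
    rw [Function.update_idem, Function.update_self] at this
    rw [← this, ← H, ← H, ← h.La, ← h.La]
    constructor
    · intro h'; rw [Bool.eq_iff_iff]; exact h'
    · intro h'; rw [h']
  refine ⟨p, q, r, s, hpq, h2.symm, h4.symm, h3.symm, h5.symm, h1, ?_, ?_, ?_, h6⟩
  · rw [← key]; simp
  · rw [← key]; simp [*]
  · rw [Ne, ← key]; simp [*]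

/-- avoided on a pair implies avoided everywhere -/
lemma Sys.pairAvoid (h : Sys (n+1) f g t L a) {c0 c1 c2 c3 : V4} (hb : Blk (t 0) c0 c1 c2 c3)
    (b : V4) (x0 : Fin n → V4)
    (h0 : ∀ x, (∀ i, t i.succ (x i) = t i.succ (x0 i)) → ¬ HH f g L a (cn c0 x) b)
    (h1 : ∀ x, (∀ i, t i.succ (x i) = t i.succ (x0 i)) → ¬ HH f g L a (cn c1 x) b) :
    ∀ x, ¬ HH f g L a x b := by
  intro x hx
  obtain ⟨z, hz, hzb⟩ := h.move x (cn c0 x0) hx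
  obtain ⟨c, y, rfl⟩ := cn_eta z
  have hy : ∀ i, t i.succ (y i) = t i.succ (x0 i) := by
    intro i
    simpa [cn] using hz i.succ
  have hc : t 0 c = t 0 c0 := by simpa [cn] using hz 0
  rcases hb.all c with rfl | rfl | rfl | rfl
  · exact h0 y hy hzb
  · exact h1 y hy hzb
  · exact hb.e02 hc.symm
  · exact hb.e02 (hc.symm.trans hb.e23.symm)

lemma toggle_box {n : ℕ} {f g f' g' : (Fin n → V4) → V4} {t : Fin n → V4 → Bool}
    {L L' : (Fin n → V4) → Bool} {a : V4}
    (h : Sys n f g t L a) (h' : Sys n f' g' t L' a) (u v : V4) (x0 : Fin n → V4)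
    (hu : ∀ x, (∀ i, t i (x i) = t i (x0 i)) → f x = u ∨ g x = u)
    (hv : ∀ x, (∀ i, t i (x i) = t i (x0 i)) → f' x = v ∨ g' x = v) :
    ∀ x, (∀ i, t i (x i) = t i (x0 i)) → ((f x = u ↔ f' x = v) ↔ (f x0 = u ↔ f' x0 = v)) := by
  intro x hx
  refine (box_ind t (fun z => (∀ i, t i (z i) = t i (x0 i)) ∧
    ((f z = u ↔ f' z = v) ↔ (f x0 = u ↔ f' x0 = v))) ?_ x0 x ⟨fun i => rfl, Iff.rfl⟩ hx).2
  rintro z i d ⟨hz, hzz⟩ hd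
  have hz' : ∀ j, t j (Function.update z i d j) = t j (x0 j) := by
    intro j
    by_cases hj : j = i
    · subst hj; rw [Function.update_self, hd, hz]
    · rw [Function.update_of_ne hj, hz]
  refine ⟨hz', ?_⟩
  by_cases hdi : d = z i
  · rw [hdi, Function.update_eq_self]; exact hzz
  · rw [h.toggle z i d hdi u (hu z hz) (hu _ hz'), h'.toggle z i d hdi v (hv z hz) (hv _ hz')]
    rw [← hzz]; tauto

lemma fin_4 (a u v w x : V4) (h : ∀ c, c = a ∨ c = u ∨ c = v ∨ c = w) (h1 : x ≠ a) (h2 : x ≠ u)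
    (h3 : x ≠ v) : x = w := by have := h x; tauto

lemma pv (F0 F1 F2 F3 G0 G1 G2 G3 a u v w : V4)
    (hall : ∀ c, c = a ∨ c = u ∨ c = v ∨ c = w)
    (f01 : F0 ≠ F1) (f02 : F0 ≠ F2) (f03 : F0 ≠ F3) (f12 : F1 ≠ F2) (f13 : F1 ≠ F3) (f23 : F2 ≠ F3)
    (g01 : G0 ≠ G1) (g02 : G0 ≠ G2) (g03 : G0 ≠ G3) (g12 : G1 ≠ G2) (g13 : G1 ≠ G3) (g23 : G2 ≠ G3)
    (hau : a ≠ u) (hav : a ≠ v) (haw : a ≠ w) (huv : u ≠ v) (huw : u ≠ w) (hvw : v ≠ w)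
    (h0 : F0 = a) (h1 : G1 = a) (h2 : F2 = u ∨ G2 = u) (h3 : F3 = v ∨ G3 = v)
    (n2 : F2 ≠ G2) (n3 : F3 ≠ G3) (a2 : G2 ≠ a) (a3 : G3 ≠ a) :
    (F2 = u → F3 = v → F1 = w) ∧ (F2 ≠ u → F3 ≠ v → G0 = w) ∧
    (¬ (F2 = u ↔ F3 = v) → F1 ≠ w ∧ G0 ≠ w) := by
  refine ⟨fun e1 e2 => ?_, fun e1 e2 => ?_, fun e => ?_⟩
  · exact fin_4 a u v w F1 hall (h0 ▸ f01.symm) (e1 ▸ f12) (e2 ▸ f13)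
  · have e3 := h2.resolve_left e1
    have e4 := h3.resolve_left e2
    exact fin_4 a u v w G0 hall (h1 ▸ g01) (e3 ▸ g02) (e4 ▸ g03)
  · by_cases e1 : F2 = u
    · have e2 : ¬ F3 = v := fun e2 => e ⟨fun _ => e2, fun _ => e1⟩
      have e4 := h3.resolve_left e2
      have e5 : G2 ≠ u := fun h => n2 (e1.trans h.symm)
      have x1 := fin_4 a u v w F3 hall (h0 ▸ f03.symm) (e1 ▸ f23.symm) e2
      have x2 := fin_4 a u v w G2 hall a2 e5 (e4 ▸ g23)
      exact ⟨x1 ▸ f13, x2 ▸ g02⟩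
    · have e2 : F3 = v := by
        by_contra e2
        exact e ⟨fun h => absurd h e1, fun h => absurd h e2⟩
      have e4 := h2.resolve_left e1
      have e5 : G3 ≠ v := fun h => n3 (e2.trans h.symm)
      have x1 := fin_4 a u v w F2 hall (h0 ▸ f02.symm) e1 (e2 ▸ f23)
      have x2 := fin_4 a u v w G3 hall a3 (e4 ▸ g23.symm) e5
      exact ⟨x1 ▸ f12, x2 ▸ g03⟩

lemma Sys.cinj (h : Sys (n+1) f g t L a) (x : Fin n → V4) {c d : V4} (hcd : c ≠ d) :
    f (cn c x) ≠ f (cn d x) := by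
  intro e
  apply hcd
  apply h.fl (cn c x) 0
  rw [cn_up0, cn_up0]; exact e

lemma Sys.LL (h : Sys (n+1) f g t L a) (x : Fin n → V4) (c d : V4) :
    L (cn c x) = L (cn d x) ↔ t 0 c = t 0 d := by
  have := h.Lt (cn d x) 0 c
  rw [cn_up0] at this
  rw [this]; simp [cn]

lemma Sys.pwA (h : Sys (n+1) f g t L a) {c0 c1 c2 c3 : V4} (hb : Blk (t 0) c0 c1 c2 c3)
    {u v w : V4} (hall : ∀ c, c = a ∨ c = u ∨ c = v ∨ c = w)
    (hau : a ≠ u) (hav : a ≠ v) (haw : a ≠ w) (huv : u ≠ v) (huw : u ≠ w) (hvw : v ≠ w)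
    (x : Fin n → V4) (hL : L (cn c0 x) = true)
    (h2 : f (cn c2 x) = u ∨ g (cn c2 x) = u) (h3 : f (cn c3 x) = v ∨ g (cn c3 x) = v)
    (h0 : f (cn c0 x) = a) :
    (f (cn c2 x) = u → f (cn c3 x) = v → HH f g L a (cn c1 x) w) ∧
    (f (cn c2 x) ≠ u → f (cn c3 x) ≠ v → HH f g L a (cn c0 x) w) ∧
    (¬ (f (cn c2 x) = u ↔ f (cn c3 x) = v) →
      ¬ HH f g L a (cn c1 x) w ∧ ¬ HH f g L a (cn c0 x) w) := by
  have L1 : L (cn c1 x) = true := by rw [← hL]; exact (h.LL x c1 c0).mpr hb.e01.symm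
  have L2 : ¬ L (cn c2 x) = true := by
    rw [← hL]; intro e; exact hb.e02 ((h.LL x c2 c0).mp e).symm
  have L3 : ¬ L (cn c3 x) = true := by
    rw [← hL]; intro e; exact hb.e02 (((h.LL x c3 c0).mp e).symm.trans hb.e23.symm)
  have h1 : g (cn c1 x) = a := by
    rcases (h.La _).mp L1 with e | e
    · exact absurd (h0.trans e.symm) (h.cinj x hb.n01)
    · exact e
  rw [h.La] at L2 L3
  have hs := h.swap
  have := pv (f (cn c0 x)) (f (cn c1 x)) (f (cn c2 x)) (f (cn c3 x)) (g (cn c0 x)) (g (cn c1 x))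
    (g (cn c2 x)) (g (cn c3 x)) a u v w hall (h.cinj x hb.n01) (h.cinj x hb.n02) (h.cinj x hb.n03)
    (h.cinj x hb.n12) (h.cinj x hb.n13) (h.cinj x hb.n23) (hs.cinj x hb.n01) (hs.cinj x hb.n02)
    (hs.cinj x hb.n03) (hs.cinj x hb.n12) (hs.cinj x hb.n13) (hs.cinj x hb.n23)
    hau hav haw huv huw hvw h0 h1 h2 h3 (h.ne _) (h.ne _) (by tauto) (by tauto)
  obtain ⟨p1, p2, p3⟩ := this
  unfold HH
  rw [hL, L1, h0, h1]
  refine ⟨?_, ?_, ?_⟩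
  · intro e1 e2; have := p1 e1 e2; simp [this, haw.symm]
  · intro e1 e2; have := p2 e1 e2; simp [this, haw.symm]
  · intro e; have := p3 e; simp [this, haw]

lemma HH_swap {n : ℕ} (f g : (Fin n → V4) → V4) (L : (Fin n → V4) → Bool) (a : V4)
    (x : Fin n → V4) (v : V4) : HH g f L a x v ↔ HH f g L a x v := by
  unfold HH; rw [or_comm]

lemma iff_or {n : ℕ} {f g : (Fin n → V4) → V4} {x : Fin n → V4} {v : V4} (hne : f x ≠ g x)
    (h : f x = v ∨ g x = v) : g x = v ↔ ¬ f x = v := by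
  constructor
  · intro e e'; exact hne (e'.trans e.symm)
  · tauto

lemma Sys.pw (h : Sys (n+1) f g t L a) {c0 c1 c2 c3 : V4} (hb : Blk (t 0) c0 c1 c2 c3)
    {u v w : V4} (hall : ∀ c, c = a ∨ c = u ∨ c = v ∨ c = w)
    (hau : a ≠ u) (hav : a ≠ v) (haw : a ≠ w) (huv : u ≠ v) (huw : u ≠ w) (hvw : v ≠ w)
    (x : Fin n → V4) (hL : L (cn c0 x) = true)
    (h2 : f (cn c2 x) = u ∨ g (cn c2 x) = u) (h3 : f (cn c3 x) = v ∨ g (cn c3 x) = v) :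
    ((f (cn c0 x) = a ↔ f (cn c2 x) = u) → (f (cn c0 x) = a ↔ f (cn c3 x) = v) →
      HH f g L a (cn c1 x) w) ∧
    (¬ (f (cn c0 x) = a ↔ f (cn c2 x) = u) → ¬ (f (cn c0 x) = a ↔ f (cn c3 x) = v) →
      HH f g L a (cn c0 x) w) ∧
    (¬ ((f (cn c0 x) = a ↔ f (cn c2 x) = u) ↔ (f (cn c0 x) = a ↔ f (cn c3 x) = v)) →
      ¬ HH f g L a (cn c1 x) w ∧ ¬ HH f g L a (cn c0 x) w) := by
  by_cases h0 : f (cn c0 x) = a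
  · have := h.pwA hb hall hau hav haw huv huw hvw x hL h2 h3 h0
    obtain ⟨p1, p2, p3⟩ := this
    simp only [h0, true_iff]
    exact ⟨p1, p2, p3⟩
  · have h0' : g (cn c0 x) = a := ((h.La _).mp hL).resolve_left h0
    have := h.swap.pwA hb hall hau hav haw huv huw hvw x hL h2.symm h3.symm h0'
    simp only [HH_swap] at this
    simp only [Ne, iff_or (h.ne _) h2, iff_or (h.ne _) h3] at this
    obtain ⟨p1, p2, p3⟩ := this
    simp only [h0, false_iff]
    exact ⟨p1, p2, p3⟩

/-- A value is avoided in hyperplane `c`. -/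
def Av {n : ℕ} (f g : (Fin (n+1) → V4) → V4) (L : (Fin (n+1) → V4) → Bool) (a c b : V4) : Prop :=
  ∀ x : Fin n → V4, ¬ HH f g L a (cn c x) b

lemma Av_or {c b : V4} (hab : b ≠ a) (hA : Av f g L a c b) (x : Fin n → V4)
    (hL : ¬ L (cn c x) = true) : f (cn c x) = b ∨ g (cn c x) = b := by
  by_contra hcon
  exact hA x ⟨hab, by tauto⟩

lemma Sys.pairStep (h : Sys (n+1) f g t L a) {c0 c1 c2 c3 : V4} (hb : Blk (t 0) c0 c1 c2 c3)
    {u v w : V4} (hall : ∀ c, c = a ∨ c = u ∨ c = v ∨ c = w)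
    (hau : a ≠ u) (hav : a ≠ v) (haw : a ≠ w) (huv : u ≠ v) (huw : u ≠ w) (hvw : v ≠ w)
    (x0 : Fin n → V4) (hL : L (cn c0 x0) = true)
    (h2 : Av f g L a c2 u) (h3 : Av f g L a c3 v) :
    (∀ x, HH f g L a (cn c0 x) w) ∨ (∀ x, HH f g L a (cn c1 x) w) ∨ (∀ x, ¬ HH f g L a x w) := by
  have hLx : ∀ x, (∀ i : Fin n, t i.succ (x i) = t i.succ (x0 i)) → L (cn c0 x) = true := by
    intro x hx
    rw [← hL]; exact (h.sub c0).box_L x0 x hx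
  have hL2 : ∀ x, (∀ i : Fin n, t i.succ (x i) = t i.succ (x0 i)) → ¬ L (cn c2 x) = true := by
    intro x hx
    rw [← hLx x hx]; intro e; exact hb.e02 ((h.LL x c2 c0).mp e).symm
  have hL3 : ∀ x, (∀ i : Fin n, t i.succ (x i) = t i.succ (x0 i)) → ¬ L (cn c3 x) = true := by
    intro x hx
    rw [← hLx x hx]; intro e; exact hb.e02 (((h.LL x c3 c0).mp e).symm.trans hb.e23.symm)
  have b2 := toggle_box (h.sub c0) (h.sub c2) a u x0 (fun x hx => (h.La _).mp (hLx x hx))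
    (fun x hx => Av_or hau.symm h2 x (hL2 x hx))
  have b3 := toggle_box (h.sub c0) (h.sub c3) a v x0 (fun x hx => (h.La _).mp (hLx x hx))
    (fun x hx => Av_or hav.symm h3 x (hL3 x hx))
  have P := fun x hx => h.pw hb hall hau hav haw huv huw hvw x (hLx x hx)
    (Av_or hau.symm h2 x (hL2 x hx)) (Av_or hav.symm h3 x (hL3 x hx))
  have ext : ∀ c, (∀ x, (∀ i : Fin n, t i.succ (x i) = t i.succ (x0 i)) → HH f g L a (cn c x) w) →
      ∀ x, HH f g L a (cn c x) w := by
    intro c hc x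
    obtain ⟨r, hr⟩ := h.Hex (cn c x)
    obtain ⟨z, hz, hzr⟩ := (h.sub c).move x x0 (v := r) hr
    have : r = w := h.Huniq (x := cn c z) hzr (hc z hz)
    rw [← this]; exact hr
  by_cases e2 : (f (cn c0 x0) = a ↔ f (cn c2 x0) = u) <;>
    by_cases e3 : (f (cn c0 x0) = a ↔ f (cn c3 x0) = v)
  · right; left
    exact ext c1 fun x hx => (P x hx).1 ((b2 x hx).mpr e2) ((b3 x hx).mpr e3)
  · right; right
    have Q := fun x hx => (P x hx).2.2 (fun e => e3 ((b3 x hx).mp (e.mp ((b2 x hx).mpr e2))))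
    exact h.pairAvoid hb w x0 (fun x hx => (Q x hx).2) (fun x hx => (Q x hx).1)
  · right; right
    have Q := fun x hx => (P x hx).2.2 (fun e => e2 ((b2 x hx).mp (e.mpr ((b3 x hx).mpr e3))))
    exact h.pairAvoid hb w x0 (fun x hx => (Q x hx).2) (fun x hx => (Q x hx).1)
  · left
    exact ext c0 fun x hx => (P x hx).2.1 (fun e => e2 ((b2 x hx).mp e)) (fun e => e3 ((b3 x hx).mp e))

lemma Sys.pairAvoid2 (h : Sys (n+1) f g t L a) {c0 c1 c2 c3 : V4} (hb : Blk (t 0) c0 c1 c2 c3)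
    (b : V4) (h0 : Av f g L a c0 b) (h1 : Av f g L a c1 b) : ∀ x, ¬ HH f g L a x b :=
  h.pairAvoid hb b (fun _ => 0) (fun x _ => h0 x) (fun x _ => h1 x)

/-- two constant hyperplanes -/
lemma Sys.fin1 (h : Sys (n+1) f g t L a) {c0 c1 c2 c3 : V4} (hb : Blk (t 0) c0 c1 c2 c3)
    {p q u : V4} (hp : ∀ x, HH f g L a (cn c0 x) p) (hq : ∀ x, HH f g L a (cn c2 x) q)
    (h3 : Av f g L a c3 u) (hua : u ≠ a) (hup : u ≠ p) : ∃ b, b ≠ a ∧ ∀ x, ¬ HH f g L a x b := by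
  by_cases hpq : p = q
  · subst hpq
    exact ⟨u, hua, h.pairAvoid2 hb.flip u (fun x hx => hup (h.Huniq hx (hq x))) h3⟩
  · obtain ⟨r, ra, rp, rq⟩ := fin_avoid a p q
    refine ⟨r, ra, h.pairAvoid2 hb r (fun x hx => rp (h.Huniq hx (hp x))) ?_⟩
    intro x hx
    obtain ⟨d, hd, hdq⟩ := h.line 0 (hq x)
    rw [cn_up0] at hdq
    have hd' : t 0 d ≠ t 0 c2 := by simpa [cn] using hd
    rcases hb.all d with rfl | rfl | rfl | rfl
    · exact hpq (h.Huniq (hp x) hdq)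
    · exact rq (h.Huniq hx hdq)
    · exact hd' rfl
    · exact hd' hb.e23.symm

lemma Sys.fin2 (h : Sys (n+1) f g t L a) {c0 c1 c2 c3 : V4} (hb : Blk (t 0) c0 c1 c2 c3)
    {p q u v : V4} (hp : (∀ x, HH f g L a (cn c0 x) p) ∨ (∀ x, HH f g L a (cn c1 x) p))
    (hq : (∀ x, HH f g L a (cn c2 x) q) ∨ (∀ x, HH f g L a (cn c3 x) q))
    (h2 : Av f g L a c2 u) (h3 : Av f g L a c3 v) (hua : u ≠ a) (hup : u ≠ p)
    (hva : v ≠ a) (hvp : v ≠ p) : ∃ b, b ≠ a ∧ ∀ x, ¬ HH f g L a x b := by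
  rcases hp with hp | hp <;> rcases hq with hq | hq
  · exact h.fin1 hb hp hq h3 hva hvp
  · exact h.fin1 hb.flip.sw.flip hp hq h2 hua hup
  · exact h.fin1 hb.sw hp hq h3 hva hvp
  · exact h.fin1 hb.flip.sw.flip.sw hp hq h2 hua hup

lemma Sys.exL {n : ℕ} {f g : (Fin (n+1) → V4) → V4} {t : Fin (n+1) → V4 → Bool}
    {L : (Fin (n+1) → V4) → Bool} {a : V4} (h : Sys (n+1) f g t L a) : ∃ x, L x = true := by
  obtain ⟨c, hc⟩ := h.fsurj (fun _ => 0) 0 a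
  exact ⟨_, (h.La _).mpr (Or.inl hc)⟩

end step

theorem Sys.main : ∀ {n : ℕ} {f g : (Fin n → V4) → V4} {t : Fin n → V4 → Bool}
    {L : (Fin n → V4) → Bool} {a : V4} (_ : Sys n f g t L a),
    ∃ b, b ≠ a ∧ ∀ x, ¬ HH f g L a x b := by
  intro n
  induction n with
  | zero =>
    intro f g t L a h
    obtain ⟨v, hv⟩ := h.Hex (fun _ => 0)
    obtain ⟨w, wa, wv, -⟩ := fin_avoid a v v
    refine ⟨w, wa, fun x hx => ?_⟩
    rw [Subsingleton.elim x (fun _ => 0)] at hx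
    exact wv (h.Huniq hx hv)
  | succ n ih =>
    intro f g t L a h
    obtain ⟨c0, c1, c2, c3, hb⟩ := h.exBlk
    rcases Nat.eq_zero_or_pos n with rfl | hn
    · obtain ⟨v, hv⟩ := h.Hex (cn c0 (fun _ => 0))
      obtain ⟨v', hv'⟩ := h.Hex (cn c1 (fun _ => 0))
      obtain ⟨w, wa, wv, wv'⟩ := fin_avoid a v v'
      refine ⟨w, wa, h.pairAvoid2 hb w ?_ ?_⟩
      · intro x hx
        rw [Subsingleton.elim x (fun _ => 0)] at hx
        exact wv (h.Huniq hx hv)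
      · intro x hx
        rw [Subsingleton.elim x (fun _ => 0)] at hx
        exact wv' (h.Huniq hx hv')
    · obtain ⟨m, rfl⟩ : ∃ m, n = m + 1 := ⟨n - 1, by omega⟩
      have A : ∀ c, ∃ b, b ≠ a ∧ Av f g L a c b := fun c => ih (h.sub c)
      obtain ⟨b0, a0, A0⟩ := A c0
      obtain ⟨b1, a1, A1⟩ := A c1
      obtain ⟨b2, a2, A2⟩ := A c2
      obtain ⟨b3, a3, A3⟩ := A c3
      by_cases e01 : b0 = b1
      · subst e01; exact ⟨b0, a0, h.pairAvoid2 hb b0 A0 A1⟩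
      by_cases e23 : b2 = b3
      · subst e23; exact ⟨b2, a2, h.pairAvoid2 hb.flip b2 A2 A3⟩
      obtain ⟨p, pa, p2, p3, hp⟩ := fin_third a b2 b3 a2.symm a3.symm e23
      obtain ⟨q, qa, q0, q1, hq⟩ := fin_third a b0 b1 a0.symm a1.symm e01
      obtain ⟨x0, hx0⟩ := (h.sub c0).exL
      obtain ⟨x2, hx2⟩ := (h.sub c2).exL
      have P := h.pairStep hb hp a2.symm a3.symm pa.symm e23 p2.symm p3.symm x0 hx0 A2 A3
      have Q := h.pairStep hb.flip hq a0.symm a1.symm qa.symm e01 q0.symm q1.symm x2 hx2 A0 A1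
      rcases or_assoc.mpr P with P | P
      · rcases or_assoc.mpr Q with Q | Q
        · exact h.fin2 hb P Q A2 A3 a2 p2.symm a3 p3.symm
        · exact ⟨q, qa, Q⟩
      · exact ⟨p, pa, P⟩

lemma mds_iff {n : ℕ} (C : Set (Fin n → V4)) :
    IsMDSCode C ↔ ∀ x k, ∃! c, Function.update x k c ∈ C := by
  unfold IsMDSCode
  refine forall_congr' fun x => forall_congr' fun k => ?_
  rw [Set.ncard_eq_one]
  constructor
  · rintro ⟨y, hy⟩
    have hy' : y ∈ kEdge x k ∩ C := by rw [hy]; rfl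
    obtain ⟨⟨c, rfl⟩, hc⟩ := hy'
    refine ⟨c, hc, fun d hd => ?_⟩
    have : Function.update x k d ∈ kEdge x k ∩ C := ⟨⟨d, rfl⟩, hd⟩
    rw [hy] at this
    exact Function.update_injective x k this
  · rintro ⟨c, hc, hu⟩
    refine ⟨Function.update x k c, ?_⟩
    ext y
    constructor
    · rintro ⟨⟨d, rfl⟩, hd⟩
      rw [hu d hd]; rfl
    · rintro rfl
      exact ⟨⟨c, rfl⟩, hc⟩

lemma split_double {n : ℕ} {S : Set (Fin n → V4)} (h : IsSplittable S) : IsDoubleMDSCode S := by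
  obtain ⟨C, D, hC, hD, hCD, rfl⟩ := h
  intro x k
  rw [Set.inter_union_distrib_left, Set.ncard_union_eq, hC, hD]
  exact hCD.mono Set.inter_subset_right Set.inter_subset_right

lemma mds_perm {n : ℕ} (C : Set (Fin n → V4)) (k : Fin n) (e : Equiv.Perm V4) (h : IsMDSCode C) :
    IsMDSCode {x | Function.update x k (e (x k)) ∈ C} := by
  rw [mds_iff] at h ⊢
  intro x i
  by_cases hi : i = k
  · subst hi
    obtain ⟨c, hc, hu⟩ := h x i
    refine ⟨e.symm c, by simpa using hc, fun d hd => ?_⟩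
    have := hu (e d) (by simpa using hd)
    rw [← this]; simp
  · have key : ∀ c, Function.update (Function.update x i c) k (e (Function.update x i c k)) =
        Function.update (Function.update x k (e (x k))) i c := by
      intro c
      rw [Function.update_of_ne (Ne.symm hi), Function.update_comm hi]
    have := h (Function.update x k (e (x k))) i
    simpa only [Set.mem_setOf_eq, key] using this

lemma zmod_aux : ∀ p q r : ZMod 2, ((p + r = 1) ↔ (q + r = 1)) ↔ p = q := by decide

lemma sum_up {n : ℕ} (T : Fin n → Finset V4) (x : Fin n → V4) (i : Fin n) (c : V4) :
    (((∑ j, if Function.update x i c j ∈ T j then (1 : ZMod 2) else 0) = 1) ↔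
      ((∑ j, if x j ∈ T j then (1 : ZMod 2) else 0) = 1)) ↔ (c ∈ T i ↔ x i ∈ T i) := by
  rw [← Finset.add_sum_erase _ _ (Finset.mem_univ i),
    ← Finset.add_sum_erase _ (fun j => if x j ∈ T j then (1 : ZMod 2) else 0) (Finset.mem_univ i)]
  have : ∑ j ∈ Finset.univ.erase i, (if Function.update x i c j ∈ T j then (1 : ZMod 2) else 0) =
      ∑ j ∈ Finset.univ.erase i, (if x j ∈ T j then (1 : ZMod 2) else 0) := by
    apply Finset.sum_congr rfl
    intro j hj
    rw [Function.update_of_ne (Finset.ne_of_mem_erase hj)]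
  rw [this, zmod_aux, Function.update_self]
  by_cases h1 : c ∈ T i <;> by_cases h2 : x i ∈ T i <;> simp [h1, h2]

lemma mds_fun {n : ℕ} {C : Set (Fin (n+1) → V4)} (hC : IsMDSCode C) (k : Fin (n+1)) :
    ∃ f : (Fin n → V4) → V4, (∀ x c, k.insertNth (α := fun _ => V4) c x ∈ C ↔ f x = c) ∧
      ∀ x i c d, f (Function.update x i c) = f (Function.update x i d) → c = d := by
  rw [mds_iff] at hC
  have : ∀ x : Fin n → V4, ∃ v, ∀ c, k.insertNth (α := fun _ => V4) c x ∈ C ↔ v = c := by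
    intro x
    obtain ⟨c, hc, hu⟩ := hC (k.insertNth (α := fun _ => V4) 0 x) k
    simp only [Fin.update_insertNth] at hc hu
    refine ⟨c, fun d => ⟨fun hd => (hu d hd).symm, ?_⟩⟩
    rintro rfl; exact hc
  choose f hf using this
  refine ⟨f, hf, fun x i c d h => ?_⟩
  have h1 := (hf (Function.update x i c) _).mpr rfl
  have h2 := (hf (Function.update x i d) _).mpr rfl
  rw [← h] at h2
  rw [Fin.insertNth_update] at h1 h2
  exact (hC _ _).unique h1 h2

lemma fin_perm : ∀ a b : V4, a ≠ b → ∃ e : Equiv.Perm V4, e a = b ∧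
    (∀ p q : V4, p ≠ q → ((p = b ∨ q = b) ↔ ¬ (p = a ∨ q = a)) →
      ∀ c, ¬ (p = c ∨ q = c) ↔ (p = e c ∨ q = e c)) := by
  intro a b hab
  obtain ⟨c, d, h1, h2, h3, h4, h5, -⟩ := fin_rest a b hab
  refine ⟨Equiv.swap a b * Equiv.swap c d, ?_, ?_⟩
  · rw [Equiv.Perm.mul_apply, Equiv.swap_apply_of_ne_of_ne h2.symm h4.symm, Equiv.swap_apply_left]
  · revert a b c d
    decide

theorem linear_anti_layer (n : ℕ) (S : Set (Fin (n + 1) → V4))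
    (hS : IsDoubleMDSCode S) (hsplit : IsSplittable S)
    (k : Fin (n + 1)) (a : V4) (hL : IsLinearDoubleCode (layer S k a)) :
    (∃ b : V4, layer S k b = (layer S k a)ᶜ) ∧
      IsDoubleMDSCode Sᶜ ∧ IsSplittable Sᶜ := by
  classical
  obtain ⟨C, D, hC, hD, hCD, rfl⟩ := hsplit
  obtain ⟨f, hf, fl⟩ := mds_fun hC k
  obtain ⟨g, hg, gl⟩ := mds_fun hD k
  obtain ⟨T, -, hT⟩ := hL
  have mem : ∀ x c, k.insertNth (α := fun _ => V4) c x ∈ C ∪ D ↔ (f x = c ∨ g x = c) := by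
    intro x c
    rw [Set.mem_union, hf, hg]
  have lay : ∀ x c, x ∈ layer (C ∪ D) k c ↔ (f x = c ∨ g x = c) := mem
  have ne : ∀ x, f x ≠ g x := by
    intro x e
    exact Set.disjoint_left.mp hCD ((hf x _).mpr rfl) ((hg x _).mpr e.symm)
  have sys : Sys n f g (fun i c => decide (c ∈ T i))
      (fun x => decide (x ∈ layer (C ∪ D) k a)) a := by
    refine ⟨fl, gl, ne, ?_, ?_⟩
    · intro x; simp only [decide_eq_true_eq]; exact lay x a
    · intro x i c
      simp only [decide_eq_decide]
      rw [hT, hT]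
      exact sum_up T x i c
  obtain ⟨b, hba, hb⟩ := sys.main
  have hb' : ∀ x, (f x = b ∨ g x = b) ↔ ¬ (f x = a ∨ g x = a) := by
    intro x
    have := hb x
    unfold HH at this
    simp only [decide_eq_true_eq, lay] at this
    tauto
  have hsp : IsSplittable (C ∪ D)ᶜ := by
    obtain ⟨e, -, he⟩ := fin_perm a b hba.symm
    refine ⟨_, _, mds_perm C k e hC, mds_perm D k e hD, ?_, ?_⟩
    · rw [Set.disjoint_left] at hCD ⊢
      intro x hx hx'
      exact hCD hx hx'
    · ext x
      have hx : x = k.insertNth (α := fun _ => V4) (x k) (k.removeNth x) := by simp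
      generalize x k = c at hx
      generalize k.removeNth x = y at hx
      subst hx
      rw [Set.mem_compl_iff, mem, he _ _ (ne y) (hb' y) c]
      simp only [Set.mem_union, Set.mem_setOf_eq, Fin.insertNth_apply_same, Fin.update_insertNth,
        hf, hg]
  refine ⟨⟨b, ?_⟩, split_double hsp, hsp⟩
  ext x
  rw [Set.mem_compl_iff, lay, lay, hb']
end

section
/- Let q be an n-quasigroup of order 4 (n ≥ 3) and suppose that for some α ∈ Σ the layer q_α, defined by q_α(x₁,…,x_{n−1}) = q(x₁,…,x_{n−1},α), is a semilinear (n−1)-quasigroup. Then q is semilinear or decomposable. -/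
/-- A decomposable `n`-quasigroup:
`f(x₁,…,xₙ) = h(g(x_{σ(1)},…,x_{σ(m)}), x_{σ(m+1)},…,x_{σ(n)})` for some
`2 ≤ m < n`, an `(n−m+1)`-quasigroup `h`, an `m`-quasigroup `g` and a
permutation `σ`. -/
def IsDecomposable {n : ℕ} (f : (Fin n → V4) → V4) : Prop :=
  ∃ (m : ℕ) (_ : 2 ≤ m) (hm : m < n)
    (h : (Fin (n - m + 1) → V4) → V4) (g : (Fin m → V4) → V4)
    (σ : Equiv.Perm (Fin n)),
    IsNQuasigroup h ∧ IsNQuasigroup g ∧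
    ∀ x : Fin n → V4,
      f x = h (Fin.cons (g fun j => x (σ ⟨j.1, j.2.trans hm⟩))
        (fun j : Fin (n - m) => x (σ ⟨m + j.1, by have := j.2; omega⟩)))


abbrev VV := ZMod 2 × ZMod 2

def stc : Fin 6 → VV × VV := ![((0,1),(1,0)), ((0,1),(1,1)), ((1,0),(0,1)), ((1,0),(1,1)), ((1,1),(0,1)), ((1,1),(1,0))]

/-- state as a map -/
def st (s : Fin 6) (v : VV) : VV := (v.1 * (stc s).1.1 + v.2 * (stc s).2.1, v.1 * (stc s).1.2 + v.2 * (stc s).2.2)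

def RR (d : VV) (s t : Fin 6) : Prop := ∀ w, st s w + d ≠ st t w
instance (d s t) : Decidable (RR d s t) := by unfold RR; infer_instance
/-- same position of d -/
def PP (d : VV) (s t : Fin 6) : Prop := ∀ w, st s w = d ↔ st t w = d
instance (d s t) : Decidable (PP d s t) := by unfold PP; infer_instance

theorem st_exists (f : VV → VV) (h0 : f 0 = 0) (hf : Function.Injective f) : ∃ s, ∀ w, f w = st s w := by
  have key : ∀ a b c : VV, a ≠ 0 → b ≠ 0 → c ≠ 0 → a ≠ b → a ≠ c → b ≠ c →
    ∃ s, a = st s (0,1) ∧ b = st s (1,0) ∧ c = st s (1,1) := by decide +kernel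
  have n : ∀ u v : VV, u ≠ v → f u ≠ f v := fun u v h h' => h (hf h')
  obtain ⟨s, h1, h2, h3⟩ := key (f (0,1)) (f (1,0)) (f (1,1)) (h0 ▸ n _ _ (by decide)) (h0 ▸ n _ _ (by decide))
    (h0 ▸ n _ _ (by decide)) (n _ _ (by decide)) (n _ _ (by decide)) (n _ _ (by decide))
  refine ⟨s, fun w => ?_⟩
  have : ∀ w : VV, w = 0 ∨ w = (0,1) ∨ w = (1,0) ∨ w = (1,1) := by decide
  have hs0 : ∀ s, (0:VV) = st s 0 := by decide +kernel
  rcases this w with rfl | rfl | rfl | rfl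
  · rw [h0]; exact hs0 s
  all_goals assumption

/-- table version of RR, for speed -/
def TyF (d : VV) (a : VV → Fin 6) : Prop :=
  a 0 = a d ∧ ∀ u, u ≠ 0 → u ≠ d → (a u ≠ a 0 ∧ PP d (a 0) (a u))

theorem line_class (a : VV → Fin 6) (ha : ∀ u v, u ≠ v → RR (u+v) (a u) (a v)) :
    (∀ u, a u = a 0) ∨ ∃ d, d ≠ 0 ∧ TyF d a := by
  have key : ∀ a0 a1 : Fin 6, RR (0,1) a0 a1 → ∀ a2, RR (1,0) a0 a2 → RR (1,1) a1 a2 → ∀ a3, RR (1,1) a0 a3 →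
    RR (1,0) a1 a3 → RR (0,1) a2 a3 → (a1 = a0 ∧ a2 = a0 ∧ a3 = a0) ∨
     (a0 = a1 ∧ (a2 ≠ a0 ∧ PP (0,1) a0 a2) ∧ (a3 ≠ a0 ∧ PP (0,1) a0 a3)) ∨
     (a0 = a2 ∧ (a1 ≠ a0 ∧ PP (1,0) a0 a1) ∧ (a3 ≠ a0 ∧ PP (1,0) a0 a3)) ∨
     (a0 = a3 ∧ (a1 ≠ a0 ∧ PP (1,1) a0 a1) ∧ (a2 ≠ a0 ∧ PP (1,1) a0 a2)) := by decide +kernel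
  have h := key (a 0) (a (0,1)) (ha 0 (0,1) (by decide)) (a (1,0)) (ha 0 (1,0) (by decide)) (ha (0,1) (1,0) (by decide))
    (a (1,1)) (ha 0 (1,1) (by decide)) (ha (0,1) (1,1) (by decide)) (ha (1,0) (1,1) (by decide))
  have c : ∀ w : VV, w = 0 ∨ w = (0,1) ∨ w = (1,0) ∨ w = (1,1) := by decide
  rcases h with h | h | h | h
  · left; intro u; rcases c u with rfl | rfl | rfl | rfl <;> tauto
  · refine Or.inr ⟨(0,1), by decide, h.1, fun u h0 h1 => ?_⟩
    rcases c u with rfl | rfl | rfl | rfl <;> tauto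
  · refine Or.inr ⟨(1,0), by decide, h.1, fun u h0 h1 => ?_⟩
    rcases c u with rfl | rfl | rfl | rfl <;> tauto
  · refine Or.inr ⟨(1,1), by decide, h.1, fun u h0 h1 => ?_⟩
    rcases c u with rfl | rfl | rfl | rfl <;> tauto

theorem pA_key : ∀ s t : Fin 6, s ≠ t → PP (0,1) s t →
   ∀ b0, RR (0,1) s b0 → ∀ b1, RR (0,1) s b1 → RR (0,1) b0 b1 →
   ∀ b2, RR (0,1) t b2 → RR (1,0) b0 b2 → RR (1,1) b1 b2 →
   ∀ b3, RR (0,1) t b3 → RR (1,1) b0 b3 → RR (1,0) b1 b3 → RR (0,1) b2 b3 →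
   b1 = b0 ∧ b2 ≠ b0 := by decide +kernel

theorem pB2_key : ∀ D : ZMod 2, ∀ s t : Fin 6, s ≠ t → PP (1,0) s t →
   ∀ b0, RR (1,0) s b0 → ∀ b1, RR (1,0) t b1 → RR (0,1) b0 b1 →
   ∀ b2, RR (1,D) (if D = 0 then s else t) b2 → RR (1,0) b0 b2 → RR (1,1) b1 b2 →
   ∀ b3, RR (1,D) (if D = 0 then t else s) b3 → RR (1,1) b0 b3 → RR (1,0) b1 b3 → RR (0,1) b2 b3 →
   b1 ≠ b0 ∧ ((PP (0,1) s b0 → s = b0) → (PP (0,1) t b1 → t = b1) → b2 = b0) := by decide +kernel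

theorem pB3_key : ∀ D : ZMod 2, ∀ s t : Fin 6, s ≠ t → PP (1,1) s t →
   ∀ b0, RR (1,1) s b0 → ∀ b1, RR (1,1) t b1 → RR (0,1) b0 b1 →
   ∀ b2, RR (1,1+D) (if D = 0 then t else s) b2 → RR (1,0) b0 b2 → RR (1,1) b1 b2 →
   ∀ b3, RR (1,1+D) (if D = 0 then s else t) b3 → RR (1,1) b0 b3 → RR (1,0) b1 b3 → RR (0,1) b2 b3 →
   b1 ≠ b0 ∧ ((PP (0,1) s b0 → s = b0) → (PP (0,1) t b1 → t = b1) → b3 = b0) := by decide +kernel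

theorem xcontra : ∀ s t t' : Fin 6, s ≠ t → PP (1,0) s t → s ≠ t' → PP (1,1) s t' →
   ∀ s4, RR (0,1) t s4 → RR (1,1) t' s4 → (PP (0,1) t' s4 → t' = s4) → False := by decide +kernel

set_option linter.unusedSectionVars false
section core
variable {ι : Type} [Fintype ι] [DecidableEq ι]

def pr (x : ι → VV) : ι → ZMod 2 := fun j => (x j).1

def dphi (φ : (ι → ZMod 2) → ZMod 2) (i : ι) (v : ι → ZMod 2) : ZMod 2 :=
  φ (v + Pi.single i 1) + φ v

def mv (φ : (ι → ZMod 2) → ZMod 2) (i : ι) (u : VV) (x : ι → VV) : ι → VV :=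
  Function.update x i (x i + (u.1, u.2 + u.1 * dphi φ i (pr x)))

theorem z2 (c : ZMod 2) : c = 0 ∨ c = 1 := by revert c; decide
theorem z2add (c : ZMod 2) : c + c = 0 := by revert c; decide

theorem single_add_self (i : ι) (v : ι → ZMod 2) : v + Pi.single i 1 + Pi.single i 1 = v := by
  ext j
  by_cases h : j = i
  · subst h; simp [add_assoc, z2add]
  · simp [h]

theorem dphi_self (φ : (ι → ZMod 2) → ZMod 2) (i : ι) (v : ι → ZMod 2) (c : ZMod 2) :
    dphi φ i (v + Pi.single i c) = dphi φ i v := by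
  rcases z2 c with rfl | rfl
  · simp
  · unfold dphi; rw [single_add_self, add_comm]

theorem pr_mv (φ : (ι → ZMod 2) → ZMod 2) (i : ι) (u : VV) (x : ι → VV) :
    pr (mv φ i u x) = pr x + Pi.single i u.1 := by
  ext j
  by_cases h : j = i
  · subst h; simp [pr, mv]
  · simp [pr, mv, h]

theorem mv_mv (φ : (ι → ZMod 2) → ZMod 2) (i : ι) (u w : VV) (x : ι → VV) :
    mv φ i w (mv φ i u x) = mv φ i (u + w) x := by
  have e : dphi φ i (pr (mv φ i u x)) = dphi φ i (pr x) := by rw [pr_mv, dphi_self]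
  conv_lhs => rw [mv, e]
  ext j : 1
  by_cases h : j = i
  · subst h
    simp only [mv, Function.update_self, Prod.fst_add, Prod.snd_add, add_assoc, Prod.mk_add_mk]
    congr 2
    ring
  · simp [mv, h]

theorem mv_zero (φ : (ι → ZMod 2) → ZMod 2) (i : ι) (x : ι → VV) : mv φ i 0 x = x := by
  ext j : 1
  by_cases h : j = i
  · subst h; simp [mv]
  · simp [mv, h]

def ddphi (φ : (ι → ZMod 2) → ZMod 2) (i j : ι) (v : ι → ZMod 2) : ZMod 2 :=
  dphi φ i (v + Pi.single j 1) + dphi φ i v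

theorem ddphi_comm (φ : (ι → ZMod 2) → ZMod 2) (i j : ι) (v : ι → ZMod 2) :
    ddphi φ i j v = ddphi φ j i v := by
  unfold ddphi dphi
  rw [add_right_comm v (Pi.single j 1)]; ring

theorem dphi_add (φ : (ι → ZMod 2) → ZMod 2) (i j : ι) (v : ι → ZMod 2) (c : ZMod 2) :
    dphi φ i (v + Pi.single j c) = dphi φ i v + c * ddphi φ i j v := by
  rcases z2 c with rfl | rfl
  · simp
  · unfold ddphi
    have := z2add (dphi φ i v)
    linear_combination -this

theorem mv_comm (φ : (ι → ZMod 2) → ZMod 2) {i j : ι} (hij : i ≠ j) (u w : VV) (x : ι → VV) :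
    mv φ i u (mv φ j w x) = mv φ j (w + (0, u.1 * w.1 * ddphi φ i j (pr x)))
      (mv φ i (u + (0, u.1 * w.1 * ddphi φ i j (pr x))) x) := by
  have hji := hij.symm
  have e1 : dphi φ i (pr (mv φ j w x)) = dphi φ i (pr x) + w.1 * ddphi φ i j (pr x) := by
    rw [pr_mv, dphi_add]
  have e2 : ∀ u' : VV, dphi φ j (pr (mv φ i u' x)) = dphi φ j (pr x) + u'.1 * ddphi φ i j (pr x) := by
    intro u'
    rw [pr_mv, dphi_add, ddphi_comm]
  ext k : 1
  by_cases h : k = i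
  · subst h
    conv_lhs => rw [mv, e1]
    conv_rhs => rw [mv, e2]
    simp [mv, hij]
    ring
  · by_cases h' : k = j
    · subst h'
      conv_lhs => rw [mv, e1]
      conv_rhs => rw [mv, e2]
      simp [mv, hij, hji]
      have := z2add (u.1 * w.1 * ddphi φ i k (pr x))
      linear_combination -this
    · simp [mv, h, h']

/-- closure -/
theorem clos {S : Set (ι → ZMod 2)} (h : ∀ v ∈ S, ∀ j, v + Pi.single j 1 ∈ S) (hne : S.Nonempty)
    (v : ι → ZMod 2) : v ∈ S := by
  obtain ⟨v0, h0⟩ := hne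
  have key : ∀ T : Finset ι, v0 + ∑ j ∈ T, Pi.single j ((v - v0) j) ∈ S := by
    intro T
    induction T using Finset.induction_on with
    | empty => simpa using h0
    | insert a T ha ih =>
      rw [Finset.sum_insert ha, add_left_comm, add_comm]
      rcases z2 ((v - v0) a) with e | e
      · rw [e]; simpa using ih
      · rw [e]; exact h _ ih a
  have := key Finset.univ
  rw [Finset.univ_sum_single] at this
  simpa using this

theorem const_of_update {X : Type*} (F : (ι → VV) → X) (h : ∀ x i v, F (Function.update x i v) = F x)
    (x y : ι → VV) : F x = F y := by
  have key : ∀ T : Finset ι, F (T.piecewise x y) = F y := by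
    intro T
    induction T using Finset.induction_on with
    | empty => simp
    | insert a T ha ih => rw [Finset.piecewise_insert, h, ih]
  simpa using key Finset.univ

theorem lineW_key : ∀ a0 a1 : Fin 6, RR (0,1) a0 a1 → ∀ a2, RR (1,0) a0 a2 → RR (1,1) a1 a2 → ∀ a3, RR (1,1) a0 a3 →
    RR (1,0) a1 a3 → RR (0,1) a2 a3 → a1 ≠ a0 →
     (a2 = a0 ∧ PP (1,0) a0 a1 ∧ a3 = a1) ∨ (a3 = a0 ∧ PP (1,1) a0 a1 ∧ a2 = a1) := by decide +kernel
theorem line1_key : ∀ a0 a1 : Fin 6, RR (0,1) a0 a1 → ∀ a2, RR (1,0) a0 a2 → RR (1,1) a1 a2 → ∀ a3, RR (1,1) a0 a3 →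
    RR (1,0) a1 a3 → RR (0,1) a2 a3 → a1 = a0 → a3 = a2 ∧ PP (0,1) a0 a2 := by decide +kernel

def Sys_s5 (φ : (ι → ZMod 2) → ZMod 2) (s : (ι → VV) → Fin 6) : Prop :=
  ∀ x i u, u ≠ 0 → RR u (s x) (s (mv φ i u x))

variable {φ : (ι → ZMod 2) → ZMod 2} {s : (ι → VV) → Fin 6}

theorem Sys_s5.line (hs : Sys_s5 φ s) (x : ι → VV) (i : ι) (u v : VV) (h : u ≠ v) :
    RR (u + v) (s (mv φ i u x)) (s (mv φ i v x)) := by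
  have e : mv φ i v x = mv φ i (u + v) (mv φ i u x) := by
    rw [mv_mv]; congr 1; revert u v; decide
  rw [e]; apply hs; clear e; revert u v; decide

theorem Sys_s5.lineW (hs : Sys_s5 φ s) (x : ι → VV) (i : ι) (h : s (mv φ i (0,1) x) ≠ s x) :
    (s (mv φ i (1,0) x) = s x ∧ PP (1,0) (s x) (s (mv φ i (0,1) x)) ∧ s (mv φ i (1,1) x) = s (mv φ i (0,1) x)) ∨
    (s (mv φ i (1,1) x) = s x ∧ PP (1,1) (s x) (s (mv φ i (0,1) x)) ∧ s (mv φ i (1,0) x) = s (mv φ i (0,1) x)) := by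
  exact lineW_key _ _ (hs x i _ (by decide)) _ (hs x i _ (by decide)) (hs.line x i (0,1) (1,0) (by decide))
    _ (hs x i _ (by decide)) (hs.line x i (0,1) (1,1) (by decide)) (hs.line x i (1,0) (1,1) (by decide)) h

theorem Sys_s5.line1 (hs : Sys_s5 φ s) (x : ι → VV) (i : ι) (h : s (mv φ i (0,1) x) = s x) :
    s (mv φ i (1,1) x) = s (mv φ i (1,0) x) ∧ PP (0,1) (s x) (s (mv φ i (1,0) x)) := by
  exact line1_key _ _ (hs x i _ (by decide)) _ (hs x i _ (by decide)) (hs.line x i (0,1) (1,0) (by decide))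
    _ (hs x i _ (by decide)) (hs.line x i (0,1) (1,1) (by decide)) (hs.line x i (1,0) (1,1) (by decide)) h

theorem Sys_s5.pA (hs : Sys_s5 φ s) (x : ι → VV) (i j : ι) (h : s (mv φ i (0,1) x) = s x) (h2 : s (mv φ i (1,0) x) ≠ s x) :
    s (mv φ i (0,1) (mv φ j (0,1) x)) = s (mv φ j (0,1) x) ∧ s (mv φ i (1,0) (mv φ j (0,1) x)) ≠ s (mv φ j (0,1) x) := by
  obtain ⟨h3, hp⟩ := hs.line1 x i h
  by_cases hij : i = j
  · subst hij
    rw [mv_mv, mv_mv, h]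
    have e1 : ((0,1) + (0,1) : VV) = 0 := by decide
    have e2 : ((0,1) + (1,0) : VV) = (1,1) := by decide
    rw [e1, e2, mv_zero, h3]
    exact ⟨rfl, h2⟩
  · have c : ∀ u, RR (0,1) (s (mv φ i u x)) (s (mv φ i u (mv φ j (0,1) x))) := by
      intro u
      rw [mv_comm φ hij]
      simp only [mul_zero, zero_mul, Prod.mk_zero_zero, add_zero]
      apply hs; decide
    have c0 := c 0
    rw [mv_zero, mv_zero] at c0
    have c1 := c (0,1)
    have c2 := c (1,0)
    have c3 := c (1,1)
    rw [h] at c1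
    rw [h3] at c3
    set y := mv φ j (0,1) x
    exact pA_key _ _ h2.symm hp _ c0 _ c1 (hs y i _ (by decide)) _ c2 (hs y i _ (by decide)) (hs.line y i (0,1) (1,0) (by decide))
     _ c3 (hs y i _ (by decide)) (hs.line y i (0,1) (1,1) (by decide)) (hs.line y i (1,0) (1,1) (by decide))

def N1 (φ : (ι → ZMod 2) → ZMod 2) (s : (ι → VV) → Fin 6) : Prop :=
  ∀ x i, s (mv φ i (0,1) x) = s x → s (mv φ i (1,0) x) = s x

theorem N1.adj (hs : Sys_s5 φ s) (hn : N1 φ s) (x : ι → VV) (i : ι) (u : VV) (hp : PP (0,1) (s x) (s (mv φ i u x))) :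
    s x = s (mv φ i u x) := by
  have c : ∀ w : VV, w = 0 ∨ w = (0,1) ∨ w = (1,0) ∨ w = (1,1) := by decide
  have k : ∀ d : ZMod 2, ∀ a b : Fin 6, a ≠ b → PP (1,d) a b → ¬ PP (0,1) a b := by decide +kernel
  by_cases h : s (mv φ i (0,1) x) = s x
  · have h2 := hn x i h
    have h3 := (hs.line1 x i h).1
    rcases c u with rfl | rfl | rfl | rfl
    · rw [mv_zero]
    · exact h.symm
    · exact h2.symm
    · rw [h3, h2]
  · rcases hs.lineW x i h with ⟨h2, hpp, h3⟩ | ⟨h3, hpp, h2⟩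
    all_goals
      have := k _ _ _ (Ne.symm h) hpp
      rcases c u with rfl | rfl | rfl | rfl
      · rw [mv_zero]
      · exact absurd hp this
      · first | exact h2.symm | (rw [h2] at hp; exact absurd hp this)
      · first | exact h3.symm | (rw [h3] at hp; exact absurd hp this)

theorem Sys_s5.pB (hs : Sys_s5 φ s) (x : ι → VV) (i j : ι) (e : ZMod 2)
    (h : s (mv φ i (0,1) x) ≠ s x) (h2 : s (mv φ i (1,e) x) = s x) :
    s (mv φ i (0,1) (mv φ j (1,e) x)) ≠ s (mv φ j (1,e) x) ∧
      (N1 φ s → s (mv φ i (1,e) (mv φ j (1,e) x)) = s (mv φ j (1,e) x)) := by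
  by_cases hij : i = j
  · subst hij
    rw [mv_mv, mv_mv, h2]
    have e1 : ((1,e) + (1,e) : VV) = 0 := by clear h2; revert e; decide
    rw [e1, mv_zero]
    refine ⟨?_, fun _ => rfl⟩
    rcases hs.lineW x i h with ⟨h2', hpp, h3⟩ | ⟨h3, hpp, h2'⟩ <;> rcases z2 e with rfl | rfl
    · rw [show ((1,0) + (0,1) : VV) = (1,1) by decide, h3]; exact h
    · rw [h3] at h2; exact absurd h2 h
    · rw [h2'] at h2; exact absurd h2 h
    · rw [show ((1,1) + (0,1) : VV) = (1,0) by decide, h2']; exact h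
  · have D0 := z2 (ddphi φ i j (pr x))
    have c : ∀ u : VV, RR ((1,e) + (0, u.1 * ddphi φ i j (pr x))) (s (mv φ i (u + (0, u.1 * ddphi φ i j (pr x))) x))
        (s (mv φ i u (mv φ j (1,e) x))) := by
      intro u
      rw [mv_comm φ hij]
      simp only [mul_one]
      apply hs
      generalize u.1 * ddphi φ i j (pr x) = t
      clear h2; revert e t; decide
    have nn : N1 φ s → ∀ u : VV, u.1 = 0 → PP (0,1) (s (mv φ i u x)) (s (mv φ i u (mv φ j (1,e) x))) →
        s (mv φ i u x) = s (mv φ i u (mv φ j (1,e) x)) := by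
      intro hn u hu hp
      rw [mv_comm φ hij] at hp ⊢
      simp only [hu, zero_mul, Prod.mk_zero_zero, add_zero] at hp ⊢
      exact hn.adj hs _ _ _ hp
    generalize ddphi φ i j (pr x) = D at *
    have c0 := c 0
    have c1 := c (0,1)
    have c2 := c (1,0)
    have c3 := c (1,1)
    have n0 := fun hn => nn hn 0 rfl
    have n1 := fun hn => nn hn (0,1) rfl
    rw [mv_zero, mv_zero] at n0
    simp only [Prod.fst_zero, zero_mul, Prod.mk_zero_zero, add_zero, mv_zero, one_mul, Prod.mk_add_mk, zero_add] at c0 c1 c2 c3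
    set y := mv φ j (1,e) x
    clear_value y
    rcases hs.lineW x i h with ⟨h2', hpp, h3⟩ | ⟨h3, hpp, h2'⟩ <;> rcases z2 e with rfl | rfl
    · have := pB2_key D _ _ (Ne.symm h) hpp _ c0 _ c1 (hs y i _ (by decide)) _
        (by rcases D0 with rfl | rfl
            · simpa [h2'] using c2
            · simpa [h3] using c2) (hs y i _ (by decide)) (hs.line y i (0,1) (1,0) (by decide))
        _ (by rcases D0 with rfl | rfl
              · simpa [h3] using c3
              · simpa [h2', z2add, show (1 + 1 : ZMod 2) = 0 from rfl] using c3) (hs y i _ (by decide))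
          (hs.line y i (0,1) (1,1) (by decide)) (hs.line y i (1,0) (1,1) (by decide))
      exact ⟨this.1, fun hn => this.2 (n0 hn) (n1 hn)⟩
    · rw [h3] at h2; exact absurd h2 h
    · rw [h2'] at h2; exact absurd h2 h
    · have := pB3_key D _ _ (Ne.symm h) hpp _ c0 _ c1 (hs y i _ (by decide)) _
        (by rcases D0 with rfl | rfl
            · simpa [h2'] using c2
            · simpa [h3] using c2) (hs y i _ (by decide)) (hs.line y i (0,1) (1,0) (by decide))
        _ (by rcases D0 with rfl | rfl
              · simpa [h3] using c3
              · simpa [h2', z2add, show (1 + 1 : ZMod 2) = 0 from rfl] using c3) (hs y i _ (by decide))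
          (hs.line y i (0,1) (1,1) (by decide)) (hs.line y i (1,0) (1,1) (by decide))
      exact ⟨this.1, fun hn => this.2 (n0 hn) (n1 hn)⟩

theorem Sys_s5.xc (hs : Sys_s5 φ s) (hn : N1 φ s) (x : ι → VV) (i j : ι)
    (hi : s (mv φ i (0,1) x) ≠ s x) (hi2 : s (mv φ i (1,0) x) = s x)
    (hj : s (mv φ j (0,1) x) ≠ s x) (hj2 : s (mv φ j (1,1) x) = s x) : False := by
  rcases hs.lineW x i hi with ⟨h2, hpp, h3⟩ | ⟨h3, hpp, h2⟩
  swap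
  · rw [h2] at hi2; exact hi hi2
  rcases hs.lineW x j hj with ⟨k2, kpp, k3⟩ | ⟨k3, kpp, k2⟩
  · rw [k3] at hj2; exact hj hj2
  by_cases hij : i = j
  · subst hij
    rw [h3] at k3; exact hi k3
  have e : mv φ i (1,1) (mv φ j (0,1) x) = mv φ j (0,1) (mv φ i (1,1) x) := by
    rw [mv_comm φ hij]
    simp
  have r1 := hs (mv φ i (1,1) x) j (0,1) (by decide)
  have r2 := hs (mv φ j (0,1) x) i (1,1) (by decide)
  have r3 := hn.adj hs (mv φ j (0,1) x) i (1,1)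
  rw [e] at r2 r3
  rw [h3] at r1
  exact xcontra _ _ _ hi.symm hpp hj.symm kpp _ r1 r2 r3

theorem Sys_s5.noT1 (hs : Sys_s5 φ s) (hess : ∀ i, ∃ x, s (mv φ i (0,1) x) ≠ s x) : N1 φ s := by
  intro x i h
  by_contra h2
  have k1 : ∀ v, v ∈ {v | ∃ z, pr z = v ∧ s (mv φ i (0,1) z) ≠ s z} := by
    apply clos
    · rintro _ ⟨z, rfl, hz⟩ j
      rcases hs.lineW z i hz with ⟨h2, _⟩ | ⟨h2, _⟩
      · exact ⟨mv φ j (1,0) z, by rw [pr_mv], (hs.pB z i j 0 hz h2).1⟩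
      · exact ⟨mv φ j (1,1) z, by rw [pr_mv], (hs.pB z i j 1 hz h2).1⟩
    · obtain ⟨z, hz⟩ := hess i
      exact ⟨_, z, rfl, hz⟩
  obtain ⟨z, hz, hzW⟩ := k1 (pr x)
  have k2 : ∀ v, v ∈ {v : ι → ZMod 2 | ∃ y, pr y = pr x ∧ (fun j => (y j).2) = v ∧
      s (mv φ i (0,1) y) = s y ∧ s (mv φ i (1,0) y) ≠ s y} := by
    apply clos
    · rintro _ ⟨y, hy, rfl, hy1, hy2⟩ j
      refine ⟨mv φ j (0,1) y, ?_, ?_, hs.pA y i j hy1 hy2⟩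
      · rw [pr_mv, hy]; simp
      · ext k
        by_cases hk : k = j
        · subst hk; simp [mv]
        · simp [mv, hk]
    · exact ⟨_, x, rfl, rfl, h, h2⟩
  obtain ⟨y, hy1, hy2, hy3, -⟩ := k2 (fun j => (z j).2)
  have : y = z := by
    ext j
    · have := congrFun (hy1.trans hz.symm) j; simpa [pr] using this
    · exact congrFun hy2 j
  subst this
  exact hzW hy3

theorem Sys_s5.oneType (hs : Sys_s5 φ s) (hn : N1 φ s) : ∃ e : ZMod 2, ∀ x i, s (mv φ i (1,e) x) = s x := by
  by_contra hcon
  push Not at hcon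
  have W : ∀ x i e, s (mv φ i (1,e) x) ≠ s x → s (mv φ i (0,1) x) ≠ s x ∧ s (mv φ i (1,e+1) x) = s x := by
    intro x i e h
    by_cases hw : s (mv φ i (0,1) x) = s x
    · have h1 := hn x i hw
      have h2 := (hs.line1 x i hw).1
      rw [h1] at h2
      rcases z2 e with rfl | rfl <;> contradiction
    · refine ⟨hw, ?_⟩
      rcases hs.lineW x i hw with ⟨h2, _⟩ | ⟨h2, _⟩ <;> rcases z2 e with rfl | rfl
      · contradiction
      · exact h2
      · exact h2
      · contradiction
  obtain ⟨x, i, hx⟩ := hcon 1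
  obtain ⟨z, j, hz⟩ := hcon 0
  have hx := W _ _ _ hx
  have hz := W _ _ _ hz
  have k1 : ∀ v, v ∈ {v | ∃ x, pr x = v ∧ s (mv φ i (0,1) x) ≠ s x ∧ s (mv φ i (1,0) x) = s x} := by
    apply clos
    · rintro _ ⟨z, rfl, h1, h2⟩ j
      have := hs.pB z i j 0 h1 h2
      exact ⟨mv φ j (1,0) z, by rw [pr_mv], this.1, this.2 hn⟩
    · exact ⟨_, x, rfl, hx⟩
  obtain ⟨x, hxz, hx⟩ := k1 (pr z)
  have k2 : ∀ v, v ∈ {v : ι → ZMod 2 | ∃ x z : ι → VV, pr x = pr z ∧ (fun l => (x l).2 + (z l).2) = v ∧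
      (s (mv φ i (0,1) x) ≠ s x ∧ s (mv φ i (1,0) x) = s x) ∧ (s (mv φ j (0,1) z) ≠ s z ∧ s (mv φ j (1,1) z) = s z)} := by
    apply clos
    · rintro _ ⟨x, z, hxz, rfl, hx, hz⟩ l
      have a1 := hs.pB x i l 0 hx.1 hx.2
      have a2 := hs.pB z j l 1 hz.1 hz.2
      refine ⟨mv φ l (1,0) x, mv φ l (1,1) z, ?_, ?_, ⟨a1.1, a1.2 hn⟩, a2.1, a2.2 hn⟩
      · rw [pr_mv, pr_mv, hxz]
      · ext k
        by_cases hk : k = l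
        · subst hk
          simp only [mv, Function.update_self, hxz, Pi.add_apply, Pi.single_eq_same, Prod.snd_add]
          have := z2add (dphi φ k (pr z))
          linear_combination this
        · simp [mv, hk]
    · exact ⟨_, x, z, hxz, rfl, hx, hz⟩
  obtain ⟨x, z, hxz, h0, hx, hz⟩ := k2 0
  have : x = z := by
    ext l
    · have := congrFun hxz l; simpa [pr] using this
    · have h := congrFun h0 l
      simp only [Pi.zero_apply] at h
      have := z2add (z l).2
      linear_combination h - this
  subst this
  exact hs.xc hn x i j hx.1 hx.2 hz.1 hz.2

def QQ (φ : (ι → ZMod 2) → ZMod 2) (x : ι → VV) : VV := (∑ i, (x i).1, ∑ i, (x i).2 + φ (pr x))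

theorem QQ_mv (i : ι) (u : VV) (x : ι → VV) : QQ φ (mv φ i u x) = QQ φ x + u := by
  have hsum : ∀ f : VV → ZMod 2, ∑ j, f (mv φ i u x j) = ∑ j, f (x j) + (f (mv φ i u x i) - f (x i)) := by
    intro f
    rw [← sub_eq_iff_eq_add', ← Finset.sum_sub_distrib, Finset.sum_eq_single i]
    · intro j _ hj; simp [mv, hj]
    · simp
  have hφ : φ (pr x + Pi.single i u.1) = φ (pr x) + u.1 * dphi φ i (pr x) := by
    rcases z2 u.1 with h | h
    · simp [h]
    · rw [h, dphi]; have := z2add (φ (pr x)); linear_combination -this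
  unfold QQ
  rw [pr_mv, hφ, hsum (fun v => v.1), hsum (fun v => v.2)]
  ext
  · simp [mv]
  · simp [mv]
    have := z2add (u.1 * dphi φ i (pr x))
    linear_combination this

theorem update_eq_mv (φ : (ι → ZMod 2) → ZMod 2) (x : ι → VV) (i : ι) (v : VV) :
    Function.update x i v = mv φ i ((v - x i).1, (v - x i).2 + (v - x i).1 * dphi φ i (pr x)) x := by
  unfold mv
  congr 1
  have := z2add ((v - x i).1 * dphi φ i (pr x))
  ext
  · simp
  · simp only [Prod.snd_add]
    rw [Prod.snd_sub] at *
    linear_combination -this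

def Bal (f : VV → ZMod 2) : Prop := (Finset.univ.filter (fun v => f v = 1)).card = 2

def Sem (H : (ι → VV) → VV → VV) : Prop :=
  ∃ (lam : VV → ZMod 2) (li : ι → VV → ZMod 2) (l0 : VV → ZMod 2), Bal lam ∧ (∀ i, Bal (li i)) ∧ Bal l0 ∧
    ∀ x w, lam (H x w) = ∑ i, li i (x i) + l0 w

theorem Sys_s5.ppconst (hs : Sys_s5 φ s) (d : VV) (h : ∀ x i u, PP d (s x) (s (mv φ i u x))) (x y : ι → VV) : PP d (s x) (s y) := by
  have := const_of_update (fun x => {w | st (s x) w = d}) (by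
    intro x i v
    ext w
    rw [update_eq_mv φ]
    exact (h x i _ w).symm) x y
  intro w
  exact Set.ext_iff.1 this w

theorem PP.rfl' (d : VV) (a : Fin 6) : PP d a a := fun _ => Iff.rfl

theorem Sys_s5.caseA (hs : Sys_s5 φ s) (h : ∀ x i, s (mv φ i (0,1) x) = s x) :
    Sem (fun x w => QQ φ x + st (s x) w) := by
  have c : ∀ w : VV, w = 0 ∨ w = (0,1) ∨ w = (1,0) ∨ w = (1,1) := by decide
  have hp := hs.ppconst (0,1) (by
    intro x i u
    obtain ⟨h3, h2⟩ := hs.line1 x i (h x i)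
    rcases c u with rfl | rfl | rfl | rfl
    · rw [mv_zero]; exact PP.rfl' _ _
    · rw [h]; exact PP.rfl' _ _
    · exact h2
    · rw [h3]; exact h2)
  have k : ∀ a b, PP (0,1) a b → ∀ w, (st a w).1 = (st b w).1 := by decide +kernel
  have kf : Bal Prod.fst := by unfold Bal; decide
  have kb : ∀ a, Bal (fun w => (st a w).1) := by unfold Bal; decide +kernel
  refine ⟨Prod.fst, fun _ => Prod.fst, fun w => (st (s 0) w).1, ?_, ?_, kb _, ?_⟩
  · unfold Bal; decide
  · exact fun _ => kf
  · intro x w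
    change (QQ φ x + st (s x) w).1 = ∑ i, (x i).1 + (st (s 0) w).1
    rw [k _ _ (hp 0 x) w]
    simp [QQ]

theorem Sys_s5.case4a (hs : Sys_s5 φ s) (e : ZMod 2) (h : ∀ x i, s (mv φ i (1,e) x) = s x)
    (hφ : ∀ i j v, i ≠ j → ddphi φ i j v = 0) :
    Sem (fun x w => QQ φ x + st (s x) w) := by
  have c : ∀ w : VV, w = 0 ∨ w = (0,1) ∨ w = (1,0) ∨ w = (1,1) := by decide
  have hp := hs.ppconst (1,e) (by
    intro x i u
    have he := h x i
    by_cases hw : s (mv φ i (0,1) x) = s x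
    · obtain ⟨h3, h2⟩ := hs.line1 x i hw
      have : s (mv φ i u x) = s x := by
        rcases z2 e with rfl | rfl <;> rcases c u with rfl | rfl | rfl | rfl <;> simp_all [mv_zero]
      rw [this]; exact PP.rfl' _ _
    · rcases hs.lineW x i hw with ⟨h2, hpp, h3⟩ | ⟨h3, hpp, h2⟩ <;> rcases z2 e with rfl | rfl <;>
        rcases c u with rfl | rfl | rfl | rfl <;> simp_all [mv_zero, PP.rfl'])
  have hd : ∀ i v, dphi φ i v = dphi φ i 0 := by
    intro i
    apply clos (S := {v | dphi φ i v = dphi φ i 0})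
    · intro v hv j
      simp only [Set.mem_ofPred_eq] at hv ⊢
      rw [dphi_add, hv]
      by_cases hij : i = j
      · subst hij; simp [ddphi, dphi_self, z2add]
      · simp [hφ i j v hij]
    · exact ⟨0, rfl⟩
  have hf : ∀ v, φ v = φ 0 + ∑ i, dphi φ i 0 * v i := by
    apply clos (S := {v | φ v = φ 0 + ∑ i, dphi φ i 0 * v i})
    · intro v hv j
      simp only [Set.mem_ofPred_eq] at hv ⊢
      have h1 := hd j v
      have : ∑ i, dphi φ i 0 * (v + Pi.single j 1 : ι → ZMod 2) i = ∑ i, dphi φ i 0 * v i + dphi φ j 0 := by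
        simp only [Pi.add_apply, mul_add, Finset.sum_add_distrib]
        congr 1
        rw [Finset.sum_eq_single j]
        · simp
        · intro b _ hb; simp [hb]
        · simp
      rw [this, ← add_assoc, ← hv, ← h1, dphi]
      have := z2add (φ v)
      linear_combination -this
    · exact ⟨0, by simp⟩
  have k : ∀ e a b, PP (1,e) a b → ∀ w, (st a w).2 + e * (st a w).1 = (st b w).2 + e * (st b w).1 := by decide +kernel
  have kb : ∀ c e a, Bal (fun w => c + ((st a w).2 + e * (st a w).1)) := by unfold Bal; decide +kernel
  have kc : ∀ c, Bal (fun w => w.2 + c * w.1) := by unfold Bal; decide +kernel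
  refine ⟨fun v => v.2 + e * v.1, fun i v => v.2 + (dphi φ i 0 + e) * v.1,
    fun w => φ 0 + ((st (s 0) w).2 + e * (st (s 0) w).1), kc _, fun i => kc _, kb _ _ _, ?_⟩
  intro x w
  simp only
  rw [k _ _ _ (hp 0 x) w]
  simp only [QQ, Prod.snd_add, Prod.fst_add, add_mul, Finset.sum_add_distrib, hf (pr x), pr, ← Finset.mul_sum]
  ring

theorem fl_comm (i j : ι) (u : VV) (x : ι → VV) : mv φ i u (mv φ j (0,1) x) = mv φ j (0,1) (mv φ i u x) := by
  by_cases hij : i = j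
  · subst hij; rw [mv_mv, mv_mv, add_comm]
  · rw [mv_comm φ hij]; simp only [mul_zero, zero_mul, Prod.mk_zero_zero, add_zero]

def FRel (φ : (ι → ZMod 2) → ZMod 2) (s : (ι → VV) → Fin 6) (i j : ι) : Prop :=
  ∀ x, s (mv φ i (0,1) (mv φ j (0,1) x)) = s x

theorem fl_fl (i : ι) (x : ι → VV) : mv φ i (0,1) (mv φ i (0,1) x) = x := by
  rw [mv_mv]; exact mv_zero φ i x

theorem rel_trans {i j k : ι} (h1 : FRel φ s i j) (h2 : FRel φ s j k) : FRel φ s i k := by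
  intro x
  have := h1 (mv φ j (0,1) (mv φ k (0,1) x))
  rw [fl_fl] at this
  rw [this, h2]

theorem rel_of_ddphi (e : ZMod 2) (h : ∀ x i, s (mv φ i (1,e) x) = s x) {i j : ι} (hij : i ≠ j)
    (v0 : ι → ZMod 2) (hd : ddphi φ i j v0 ≠ 0) : FRel φ s i j := by
  have hd1 : ddphi φ i j v0 = 1 := (z2 _).resolve_left hd
  have key : ∀ v, v ∈ {v | ∀ x, pr x = v → s (mv φ i (0,1) (mv φ j (0,1) x)) = s x} := by
    apply clos
    · intro v hv l x hx
      have hy : pr (mv φ l (1,e) x) = v := by rw [pr_mv, hx]; exact single_add_self _ _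
      have := hv _ hy
      have ee : mv φ i (0,1) (mv φ j (0,1) (mv φ l (1,e) x)) = mv φ l (1,e) (mv φ i (0,1) (mv φ j (0,1) x)) := by
        rw [← fl_comm l j, ← fl_comm l i]
      rw [ee, h, h] at this
      exact this
    · refine ⟨v0, fun x hx => ?_⟩
      have := mv_comm φ hij (1,e) (1,e) x
      rw [hx, hd1] at this
      have e1 : ((1,e) + (0, (1:VV).1 * (1:VV).1 * 1) : VV) = (0,1) + (1,e) := by
        clear h this; revert e; decide
      simp only [mul_one] at this e1
      change mv φ i (1,e) (mv φ j (1,e) x) = mv φ j ((1,e) + (0,1)) (mv φ i ((1,e) + (0,1)) x) at this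
      rw [add_comm (1,e) ((0,1) : VV), ← mv_mv, ← mv_mv] at this
      have h2 := congrArg s this
      rw [h, h, h, ← fl_comm, h] at h2
      rw [fl_comm]; exact h2.symm
  exact fun x => key (pr x) x rfl

theorem reach_step (e : ZMod 2) (h : ∀ x i, s (mv φ i (1,e) x) = s x) (Y : ι → VV) {a i0 : ι} (ha : a ≠ i0)
    (hr : FRel φ s i0 a) (X : ι → VV) : ∃ Z, s Z = s X ∧ (∃ t : ZMod 2, QQ φ Z = QQ φ X + (t, t * e)) ∧ Z a = Y a ∧
      ∀ m, m ≠ a → m ≠ i0 → Z m = X m := by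
  obtain ⟨Z1, h1, ⟨t, h2⟩, h3, h4⟩ : ∃ Z, s Z = s X ∧ (∃ t : ZMod 2, QQ φ Z = QQ φ X + (t, t * e)) ∧ (Z a).1 = (Y a).1 ∧
      ∀ m, m ≠ a → m ≠ i0 → Z m = X m := by
    by_cases hc : (X a).1 = (Y a).1
    · exact ⟨X, rfl, ⟨0, by simp⟩, hc, fun _ _ _ => rfl⟩
    · refine ⟨mv φ a (1,e) X, h _ _, ⟨1, by rw [QQ_mv]; simp⟩, ?_, fun m hm _ => by simp [mv, hm]⟩
      simp only [mv, Function.update_self, Prod.fst_add]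
      revert hc; generalize (X a).1 = p; generalize (Y a).1 = q; revert p q; decide
  by_cases hc : (Z1 a).2 = (Y a).2
  · exact ⟨Z1, h1, ⟨t, h2⟩, Prod.ext h3 hc, h4⟩
  · refine ⟨mv φ i0 (0,1) (mv φ a (0,1) Z1), (hr Z1).trans h1, ⟨t, ?_⟩, ?_, ?_⟩
    · rw [QQ_mv, QQ_mv, h2, add_assoc _ ((0,1) : VV)]
      rw [show ((0,1) + (0,1) : VV) = 0 by decide, add_zero]
    · have : mv φ i0 (0,1) (mv φ a (0,1) Z1) a = Z1 a + (0,1) := by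
        simp [mv, ha]
      rw [this]
      refine Prod.ext (by simpa using h3) ?_
      simp only [Prod.snd_add]
      revert hc; generalize (Z1 a).2 = p; generalize (Y a).2 = q; revert p q; decide
    · intro m hm hm'
      rw [← h4 m hm hm']
      simp [mv, hm, hm']

theorem reach (e : ZMod 2) (h : ∀ x i, s (mv φ i (1,e) x) = s x) (C : Finset ι) (i0 : ι) (hi0 : i0 ∈ C)
    (hC : ∀ m ∈ C, FRel φ s i0 m) (X Y : ι → VV) (hXY : ∀ m, m ∉ C → X m = Y m) (hQ : QQ φ X = QQ φ Y) : s X = s Y := by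
  have key : ∀ T : Finset ι, T ⊆ C → i0 ∉ T → ∃ Z, s Z = s X ∧ (∃ t : ZMod 2, QQ φ Z = QQ φ X + (t, t * e)) ∧
      ∀ m, (m ∈ T ∨ m ∉ C) → Z m = Y m := by
    intro T
    induction T using Finset.induction_on with
    | empty => intro _ _; exact ⟨X, rfl, ⟨0, by simp⟩, fun m hm => hXY m (by simpa using hm)⟩
    | insert a T ha ih =>
      intro hT hi
      rw [Finset.mem_insert, not_or] at hi
      obtain ⟨Z, h1, ⟨t, h2⟩, h3⟩ := ih (fun x hx => hT (Finset.mem_insert_of_mem hx)) hi.2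
      have haC : a ∈ C := hT (Finset.mem_insert_self _ _)
      obtain ⟨Z', k1, ⟨t', k2⟩, k3, k4⟩ := reach_step e h Y (Ne.symm hi.1) (hC a haC) Z
      refine ⟨Z', k1.trans h1, ⟨t + t', ?_⟩, ?_⟩
      · rw [k2, h2, add_assoc]; congr 1; simp [add_mul]
      · intro m hm
        by_cases hma : m = a
        · rw [hma]; exact k3
        · have hm0 : m ≠ i0 := by
            rintro rfl
            rcases hm with hm | hm
            · rw [Finset.mem_insert] at hm; tauto
            · exact hm hi0
          rw [k4 m hma hm0]
          apply h3
          rw [Finset.mem_insert] at hm; tauto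
  obtain ⟨Z, h1, ⟨t, h2⟩, h3⟩ := key (C.erase i0) (Finset.erase_subset _ _) (Finset.notMem_erase _ _)
  have h3 : ∀ m, m ≠ i0 → Z m = Y m := by
    intro m hm
    apply h3
    by_cases hmC : m ∈ C
    · left; exact Finset.mem_erase.2 ⟨hm, hmC⟩
    · exact Or.inr hmC
  obtain ⟨Z, h1, ⟨t, h2⟩, h3, h4⟩ : ∃ Z, s Z = s X ∧ (∃ t : ZMod 2, QQ φ Z = QQ φ X + (t, t * e)) ∧
      (∀ m, m ≠ i0 → Z m = Y m) ∧ (Z i0).1 = (Y i0).1 := by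
    by_cases hc : (Z i0).1 = (Y i0).1
    · exact ⟨Z, h1, ⟨t, h2⟩, h3, hc⟩
    · refine ⟨mv φ i0 (1,e) Z, (h _ _).trans h1, ⟨t + 1, ?_⟩, fun m hm => by rw [← h3 m hm]; simp [mv, hm], ?_⟩
      · rw [QQ_mv, h2, add_assoc]; congr 1; simp [add_mul]
      · simp only [mv, Function.update_self, Prod.fst_add]
        revert hc; generalize (Z i0).1 = p; generalize (Y i0).1 = q; revert p q; decide
  rw [← h1]
  congr 1
  have hZ : Z = mv φ i0 (0, (Y i0).2 - (Z i0).2) Y := by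
    ext m : 1
    by_cases hm : m = i0
    · subst hm
      simp only [mv, Function.update_self]
      refine Prod.ext (by simpa using h4) ?_
      simp only [Prod.snd_add, zero_mul, add_zero]
      generalize (Z m).2 = p; generalize (Y m).2 = q; revert p q; decide
    · rw [h3 m hm]; simp [mv, hm]
  have q1 : QQ φ Z = QQ φ Y + (0, (Y i0).2 - (Z i0).2) := by
    conv_lhs => rw [hZ]
    rw [QQ_mv]
  rw [h2, hQ] at q1
  have q2 := add_left_cancel q1
  have t0 : t = 0 := congrArg Prod.fst q2
  have q3 := congrArg Prod.snd q2
  simp only [t0, zero_mul] at q3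
  rw [hZ, ← q3]
  exact mv_zero φ i0 Y

theorem Sys_s5.case4b (e : ZMod 2) (h : ∀ x i, s (mv φ i (1,e) x) = s x)
    (hφ : ∃ i j v, i ≠ j ∧ ddphi φ i j v ≠ 0) :
    ∃ C : Finset ι, 2 ≤ C.card ∧ ∀ u w z : ι → VV, QQ φ (C.piecewise u z) = QQ φ (C.piecewise w z) →
      ∀ z', QQ φ (C.piecewise u z') = QQ φ (C.piecewise w z') ∧ s (C.piecewise u z') = s (C.piecewise w z') := by
  classical
  obtain ⟨i0, j0, v0, hne, hd⟩ := hφ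
  set C : Finset ι := Finset.univ.filter (fun m => FRel φ s i0 m) with hCdef
  have hmem : ∀ m, m ∈ C ↔ FRel φ s i0 m := by simp [hCdef]
  have hi0 : i0 ∈ C := by rw [hmem]; intro x; rw [fl_fl]
  have hj0 : j0 ∈ C := by rw [hmem]; exact rel_of_ddphi e h hne v0 hd
  have hout : ∀ i ∈ C, ∀ j, j ∉ C → ∀ v, ddphi φ j i v = 0 := by
    intro i hi j hj v
    by_contra hc
    apply hj
    rw [hmem] at hi ⊢
    have hij : i ≠ j := by
      rintro rfl; exact hj ((hmem _).2 hi)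
    rw [ddphi_comm] at hc
    exact rel_trans hi (rel_of_ddphi e h hij v hc)
  have hdp : ∀ j, j ∉ C → ∀ z u w : ι → VV, dphi φ j (pr (C.piecewise u z)) = dphi φ j (pr (C.piecewise w z)) := by
    intro j hj z u w
    apply const_of_update (fun u => dphi φ j (pr (C.piecewise u z)))
    intro x i v
    by_cases hi : i ∈ C
    · have : C.piecewise (Function.update x i v) z = Function.update (C.piecewise x z) i v := by
        ext m : 1
        by_cases hm : m = i
        · subst hm; simp [hi]
        · simp [hm, Finset.piecewise]
      simp only [this]
      rw [update_eq_mv φ, pr_mv, dphi_add, hout i hi j hj]; simp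
    · have : C.piecewise (Function.update x i v) z = C.piecewise x z := by
        ext m : 1
        by_cases hm : m = i
        · subst hm; simp [hi]
        · simp [hm, Finset.piecewise]
      simp only [this]
  refine ⟨C, ?_, ?_⟩
  · have : ({i0, j0} : Finset ι) ⊆ C := by
      intro x hx; simp only [Finset.mem_insert, Finset.mem_singleton] at hx
      rcases hx with rfl | rfl <;> assumption
    calc 2 = ({i0, j0} : Finset ι).card := (Finset.card_pair hne).symm
      _ ≤ _ := Finset.card_le_card this
  · intro u w z hz z'
    have hQ : QQ φ (C.piecewise u z') - QQ φ (C.piecewise w z') = QQ φ (C.piecewise u z) - QQ φ (C.piecewise w z) := by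
      apply const_of_update (fun z => QQ φ (C.piecewise u z) - QQ φ (C.piecewise w z))
      intro x j v
      by_cases hj : j ∈ C
      · have : ∀ u, C.piecewise u (Function.update x j v) = C.piecewise u x := by
          intro u
          ext m : 1
          by_cases hm : m = j
          · subst hm; simp [hj]
          · simp [hm, Finset.piecewise]
        rw [this, this]
      · have : ∀ u : ι → VV, C.piecewise u (Function.update x j v) = Function.update (C.piecewise u x) j v := by
          intro u
          ext m : 1
          by_cases hm : m = j
          · subst hm; simp [hj]
          · simp [hm, Finset.piecewise]
        rw [this, this, update_eq_mv φ, update_eq_mv φ, QQ_mv, QQ_mv, hdp j hj x u w]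
        simp [hj]
    rw [hz, sub_self, sub_eq_zero] at hQ
    refine ⟨hQ, reach e h C i0 hi0 (fun m hm => (hmem m).1 hm) _ _ ?_ hQ⟩
    intro m hm
    simp [hm]

def GG (φ : (ι → ZMod 2) → ZMod 2) (s : (ι → VV) → Fin 6) (x : ι → VV) (w : VV) : VV := QQ φ x + st (s x) w

theorem GG_inj (x : ι → VV) : Function.Injective (GG φ s x) := by
  intro a b h
  have k : ∀ t a b, st t a = st t b → a = b := by decide +kernel
  exact k _ _ _ (add_left_cancel h)

theorem Sys_s5.GG_mv (hs : Sys_s5 φ s) (x : ι → VV) (i : ι) (u : VV) (hu : u ≠ 0) (w : VV) : GG φ s (mv φ i u x) w ≠ GG φ s x w := by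
  intro h
  unfold GG at h
  rw [QQ_mv, add_assoc] at h
  have h := add_left_cancel h
  have := hs x i u hu w
  apply this
  rw [← h]
  have k : ∀ a b : VV, a + b + a = b := by decide
  exact k _ _

theorem Sys_s5.GG_upd (hs : Sys_s5 φ s) (x : ι → VV) (i : ι) (v : VV) (hv : v ≠ x i) (w : VV) :
    GG φ s (Function.update x i v) w ≠ GG φ s x w := by
  rw [update_eq_mv φ]
  apply hs.GG_mv
  intro h
  apply hv
  have h1 := congrArg Prod.fst h
  have h2 := congrArg Prod.snd h
  simp only [Prod.fst_zero, Prod.snd_zero] at h1 h2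
  rw [h1, zero_mul, add_zero] at h2
  exact sub_eq_zero.1 (Prod.ext h1 h2)

theorem pw_upd {X : Type*} (C : Finset ι) (x z : ι → X) (i : ι) (v : X) (hi : i ∈ C) :
    C.piecewise (Function.update x i v) z = Function.update (C.piecewise x z) i v := by
  ext m : 1
  by_cases hm : m = i
  · subst hm; simp [hi]
  · simp [hm, Finset.piecewise]

theorem pw_upd' {X : Type*} (C : Finset ι) (x z : ι → X) (i : ι) (v : X) (hi : i ∉ C) :
    C.piecewise (Function.update x i v) z = C.piecewise x z := by
  ext m : 1
  by_cases hm : m = i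
  · subst hm; simp [hi]
  · simp [hm, Finset.piecewise]

theorem pw_updr {X : Type*} (C : Finset ι) (x z : ι → X) (i : ι) (v : X) (hi : i ∉ C) :
    C.piecewise x (Function.update z i v) = Function.update (C.piecewise x z) i v := by
  ext m : 1
  by_cases hm : m = i
  · subst hm; simp [hi]
  · simp [hm, Finset.piecewise]

theorem pw_updr' {X : Type*} (C : Finset ι) (x z : ι → X) (i : ι) (v : X) (hi : i ∈ C) :
    C.piecewise x (Function.update z i v) = C.piecewise x z := by
  ext m : 1
  by_cases hm : m = i
  · subst hm; simp [hi]
  · simp [hm, Finset.piecewise]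

/-- invariance under second coordinates -/
theorem snd_const {X : Type*} (F : (ι → VV) → X) (J : Finset ι)
    (h : ∀ x, ∀ i ∈ J, F (Function.update x i (x i + (0,1))) = F x)
    (x y : ι → VV) (h1 : pr x = pr y) (h2 : ∀ i, i ∉ J → x i = y i) : F x = F y := by
  have key := const_of_update (fun y => F (fun j => ((x j).1, if j ∈ J then (y j).2 else (x j).2))) (by
    intro y i v
    by_cases hi : i ∈ J
    · set b : ι → VV := fun j => ((x j).1, if j ∈ J then (y j).2 else (x j).2) with hb
      have e : (fun j => ((x j).1, if j ∈ J then (Function.update y i v j).2 else (x j).2)) = 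
          Function.update b i ((x i).1, v.2) := by
        ext j : 1
        by_cases hj : j = i
        · subst hj; simp [hi]
        · simp [hj, hb]
      simp only [e]
      by_cases hv : v.2 = (y i).2
      · congr 1
        rw [Function.update_eq_self_iff]
        simp [hb, hi, hv]
      · rw [← h b i hi]
        congr 2
        refine Prod.ext (by simp [hb]) ?_
        simp only [hb, Prod.snd_add, if_pos hi]
        revert hv; generalize v.2 = p; generalize (y i).2 = q; revert p q; decide
    · congr 1
      ext j : 1
      by_cases hj : j = i
      · subst hj; simp [hi]
      · simp [hj]) x y
  have e1 : (fun j => ((x j).1, if j ∈ J then (x j).2 else (x j).2)) = x := by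
    ext j <;> simp
  have e2 : (fun j => ((x j).1, if j ∈ J then (y j).2 else (x j).2)) = y := by
    ext j
    · exact congrFun h1 j
    · by_cases hj : j ∈ J
      · simp [hj]
      · simp [hj, h2 j hj]
  simp only [e1, e2] at key
  exact key

theorem Sys_s5.caseB (hs : Sys_s5 φ s) (I : Finset ι) (hI : ∀ i ∈ I, ∃ x, s (mv φ i (0,1) x) ≠ s x)
    (hI' : ∀ i, i ∉ I → ∀ x, s (mv φ i (0,1) x) = s x) (u w z z' : ι → VV) (ω ω' : VV)
    (h : GG φ s (I.piecewise u z) ω = GG φ s (I.piecewise w z) ω') :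
    GG φ s (I.piecewise u z') ω = GG φ s (I.piecewise w z') ω' := by
  have c : ∀ w : VV, w = 0 ∨ w = (0,1) ∨ w = (1,0) ∨ w = (1,1) := by decide
  have ne2 : ∀ a b : VV, a ≠ b → a.1 = b.1 → a.2 = b.2 + 1 := by decide
  have hmv : ∀ (x : ι → VV) i, Function.update x i (x i + (0,1)) = mv φ i (0,1) x := by
    intro x i; simp [mv]
  -- first components
  have hPP : ∀ x, PP (0,1) (s (I.piecewise x z)) (s (I.piecewise x z')) := by
    intro x
    have := const_of_update (fun z => {w | st (s (I.piecewise x z)) w = (0,1)}) (by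
      intro z i v
      by_cases hi : i ∈ I
      · simp only [pw_updr' I x z i v hi]
      · simp only [pw_updr I x z i v hi]
        ext w
        rw [update_eq_mv φ]
        generalize ((v - I.piecewise x z i).1, _) = u
        set y := I.piecewise x z
        obtain ⟨h3, h2⟩ := hs.line1 y i (hI' i hi y)
        have : PP (0,1) (s y) (s (mv φ i u y)) := by
          rcases c u with rfl | rfl | rfl | rfl
          · rw [mv_zero]; exact PP.rfl' _ _
          · rw [hI' i hi]; exact PP.rfl' _ _
          · exact h2
          · rw [h3]; exact h2
        exact (this w).symm) z z'
    intro w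
    exact Set.ext_iff.1 this w
  have kst : ∀ a b, PP (0,1) a b → ∀ w, (st a w).1 = (st b w).1 := by decide +kernel
  obtain ⟨d, hd⟩ : ∃ d : ZMod 2, ∀ x ω, (GG φ s (I.piecewise x z') ω).1 = (GG φ s (I.piecewise x z) ω).1 + d := by
    have e : ∀ (x z : ι → VV), (QQ φ (I.piecewise x z)).1 = ∑ j ∈ I, (x j).1 + ∑ j ∈ Finset.univ \ I, (z j).1 := by
      intro x z
      have : ∀ j, (I.piecewise x z j).1 = I.piecewise (fun j => (x j).1) (fun j => (z j).1) j := by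
        intro j; by_cases hj : j ∈ I <;> simp [hj]
      simp only [QQ, this]
      rw [Finset.sum_piecewise]; simp
    refine ⟨∑ j ∈ Finset.univ \ I, (z' j).1 - ∑ j ∈ Finset.univ \ I, (z j).1, fun x ω => ?_⟩
    simp only [GG, Prod.fst_add, e, kst _ _ (hPP x) ω]
    ring
  have hdup : ∀ x ω ω', (GG φ s (I.piecewise x z) ω).1 = (GG φ s (I.piecewise x z) ω').1 →
      (GG φ s (I.piecewise x z) ω).2 + (GG φ s (I.piecewise x z') ω).2 =
      (GG φ s (I.piecewise x z) ω').2 + (GG φ s (I.piecewise x z') ω').2 := by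
    intro x ω ω' h
    by_cases hw : ω = ω'
    · rw [hw]
    · have h1 := ne2 _ _ ((GG_inj (φ := φ) (s := s) (I.piecewise x z)).ne hw) h
      have h2 := ne2 _ _ ((GG_inj (φ := φ) (s := s) (I.piecewise x z')).ne hw) (by rw [hd, hd, h])
      rw [h1, h2]
      have := z2add 1
      linear_combination this
  set F : ZMod 2 → (ι → VV) → Set (ZMod 2) := fun v x => {e | ∃ ω, (GG φ s (I.piecewise x z) ω).1 = v ∧
    (GG φ s (I.piecewise x z) ω).2 + (GG φ s (I.piecewise x z') ω).2 = e} with hF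
  have hFs : ∀ v x ω, (GG φ s (I.piecewise x z) ω).1 = v →
      F v x = {(GG φ s (I.piecewise x z) ω).2 + (GG φ s (I.piecewise x z') ω).2} := by
    intro v x ω hv
    ext e
    constructor
    · rintro ⟨ω', h1, h2⟩
      rw [Set.mem_singleton_iff, ← h2]
      exact hdup _ _ _ (h1.trans hv.symm)
    · intro he
      exact ⟨ω, hv, (Set.mem_singleton_iff.1 he).symm⟩
  have step : ∀ v x, ∀ i ∈ I, ∀ a ω, a ≠ x i → (GG φ s (I.piecewise x z) ω).1 = v →
      (GG φ s (Function.update (I.piecewise x z) i a) ω).1 = v → F v (Function.update x i a) = F v x := by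
    intro v x i hi a ω ha h1 h2
    rw [← pw_upd I x z i a hi] at h2
    rw [hFs v x ω h1, hFs v _ ω h2]
    have hx : ∀ z : ι → VV, a ≠ I.piecewise x z i := by intro z; simpa [hi] using ha
    have n1 := hs.GG_upd (I.piecewise x z) i a (hx z) ω
    have n2 := hs.GG_upd (I.piecewise x z') i a (hx z') ω
    rw [← pw_upd I x _ i a hi] at n1 n2
    rw [ne2 _ _ n1 (h2.trans h1.symm), ne2 _ _ n2 (by rw [hd, hd, h1, h2])]
    congr 1
    have := z2add 1
    linear_combination this
  have kblock : ∀ a b : Fin 6, ∀ t : ZMod 2, ∃ w, (st a w).1 = t ∧ (st b w).1 = t := by decide +kernel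
  have kcross : ∀ e : ZMod 2, ∀ a b : Fin 6, a ≠ b → PP (1,e) a b → ∀ t : ZMod 2, ∃ w, (st a w).1 = t ∧ (st b w).1 = t + 1 := by
    decide +kernel
  have block : ∀ v x i, F v (Function.update x i (x i + (0,1))) = F v x := by
    intro v x i
    by_cases hi : i ∈ I
    · set X := I.piecewise x z with hX
      have hxi : x i = X i := by simp [hX, hi]
      obtain ⟨w, h1, h2⟩ := kblock (s X) (s (mv φ i (0,1) X)) (v - (QQ φ X).1)
      refine step v x i hi _ w (by generalize x i = a; revert a; decide) ?_ ?_
      · simp only [GG, Prod.fst_add, ← hX, h1]; ring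
      · rw [← hX, hxi, hmv]; simp only [GG, Prod.fst_add, h2, QQ_mv]; ring
    · simp only [hF, pw_upd' I x _ i _ hi]
  have blockc : ∀ v x y, pr x = pr y → F v x = F v y := by
    intro v x y hxy
    exact snd_const (F v) Finset.univ (fun x i _ => block v x i) x y hxy (by simp)
  have hFI : ∀ v x y, (∀ i ∈ I, (x i).1 = (y i).1) → F v x = F v y := by
    intro v x y hxy
    have e : ∀ z'', I.piecewise (I.piecewise y x) z'' = I.piecewise y z'' := by
      intro z''; ext j : 1; by_cases hj : j ∈ I <;> simp [hj]
    have : F v y = F v (I.piecewise y x) := by simp only [hF, e]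
    rw [this]
    apply blockc
    ext j
    by_cases hj : j ∈ I
    · simp [pr, hj, hxy j hj]
    · simp [pr, hj]
  have cross : ∀ v x, ∀ i ∈ I, ∃ e, F v (Function.update x i (x i + (1,e))) = F v x := by
    intro v x i hi
    have k1 : ∀ v, v ∈ {v | ∃ z, pr z = v ∧ s (mv φ i (0,1) z) ≠ s z} := by
      apply clos
      · rintro _ ⟨z, rfl, hz⟩ j
        rcases hs.lineW z i hz with ⟨h2, _⟩ | ⟨h2, _⟩
        · exact ⟨mv φ j (1,0) z, by rw [pr_mv], (hs.pB z i j 0 hz h2).1⟩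
        · exact ⟨mv φ j (1,1) z, by rw [pr_mv], (hs.pB z i j 1 hz h2).1⟩
      · obtain ⟨z, hz⟩ := hI i hi
        exact ⟨_, z, rfl, hz⟩
    obtain ⟨Z, hZ, hZW⟩ := k1 (pr (I.piecewise x z))
    have sc : ∀ x y, pr x = pr y → (∀ i, i ∉ (Finset.univ \ I) → x i = y i) → s x = s y :=
      snd_const s (Finset.univ \ I) (by
        intro x j hj
        rw [hmv]; exact hI' j (by simpa using hj) x)
    set X := I.piecewise Z z with hX
    have hZX : pr Z = pr X := by
      rw [hZ]
      ext j
      have := congrFun hZ j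
      by_cases hj : j ∈ I
      · simp only [pr, hj, Finset.piecewise_eq_of_mem, hX] at this ⊢; exact this.symm
      · simp [pr, hj, hX]
    have hXI : ∀ j ∈ I, Z j = X j := by intro j hj; simp [hX, hj]
    have e1 : s Z = s X := sc _ _ hZX (by intro j hj; exact hXI j (by simpa using hj))
    have e2 : s (mv φ i (0,1) Z) = s (mv φ i (0,1) X) := by
      apply sc
      · rw [pr_mv, pr_mv, hZX]
      · intro j hj
        have hj := hXI j (by simpa using hj)
        by_cases hji : j = i
        · subst hji; simp [mv, hj]
        · simp [mv, hji, hj]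
    rw [e1, e2] at hZW
    obtain ⟨e, e', hne, hPe⟩ : ∃ e e' : ZMod 2, s X ≠ s (mv φ i (1,e) X) ∧ PP (1,e') (s X) (s (mv φ i (1,e) X)) := by
      rcases hs.lineW X i hZW with ⟨_, h2, h3⟩ | ⟨_, h2, h3⟩
      · exact ⟨1, 0, by rw [h3]; exact hZW.symm, by rw [h3]; exact h2⟩
      · exact ⟨0, 1, by rw [h3]; exact hZW.symm, by rw [h3]; exact h2⟩
    obtain ⟨ω, h1, h2⟩ := kcross e' _ _ hne hPe (v - (QQ φ X).1)
    have fin := step v Z i hi (X i + (1, e + 1 * dphi φ i (pr X))) ω (by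
        rw [hXI i hi]; generalize X i = a; generalize e + 1 * dphi φ i (pr X) = b; revert a b; decide) 
      (by simp only [GG, Prod.fst_add, ← hX, h1]; ring)
      (by
        rw [← hX]
        change (GG φ s (mv φ i (1,e) X) ω).1 = v
        simp only [GG, Prod.fst_add, h2, QQ_mv]
        have := z2add 1
        linear_combination this)
    have hxZ : ∀ j ∈ I, (x j).1 = (Z j).1 := by
      intro j hj
      have := congrFun hZ j
      simpa [pr, hj] using this.symm
    refine ⟨0, ?_⟩
    rw [hFI v x Z hxZ, ← fin]
    apply hFI
    intro j hj
    by_cases hji : j = i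
    · subst hji; simp [hxZ j hj, hXI j hj]
    · simp [hji, hxZ j hj]
  have hFc : ∀ v x y, F v x = F v y := by
    intro v
    apply const_of_update
    intro x i a
    by_cases ha : a.1 = (x i).1
    · apply blockc
      ext j
      by_cases hji : j = i
      · subst hji; simp [pr, ha]
      · simp [pr, hji]
    · by_cases hi : i ∈ I
      · obtain ⟨e, he⟩ := cross v x i hi
        rw [← he]
        apply blockc
        ext j
        by_cases hji : j = i
        · subst hji; simp only [pr, Function.update_self, Prod.fst_add]
          revert ha; generalize a.1 = p; generalize (x j).1 = q; revert p q; decide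
        · simp [pr, hji]
      · simp only [hF, pw_upd' I x _ i _ hi]
  have f1 := hFs _ u ω rfl
  have f2 := hFs _ w ω' (congrArg Prod.fst h).symm
  rw [hFc _ w u] at f2
  have f3 := Set.singleton_injective (f1.symm.trans f2)
  rw [h] at f3
  exact Prod.ext (by rw [hd, hd, h]) (add_left_cancel f3)

theorem core_thm (G : (ι → VV) → VV → VV) (hrow : ∀ x, Function.Injective (G x))
    (hcol : ∀ x i ω v, v ≠ x i → G (Function.update x i v) ω ≠ G x ω)
    (hL : ∀ x, (G x 0).1 = ∑ i, (x i).1) :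
    Sem G ∨ (∃ C : Finset ι, 2 ≤ C.card ∧ ∀ u w z : ι → VV, G (C.piecewise u z) 0 = G (C.piecewise w z) 0 →
      ∀ z' ω, G (C.piecewise u z') ω = G (C.piecewise w z') ω) ∨
    ∃ I : Finset ι, I.Nonempty ∧ I ≠ Finset.univ ∧ ∀ (u w z z' : ι → VV) (ω ω' : VV),
      G (I.piecewise u z) ω = G (I.piecewise w z) ω' → G (I.piecewise u z') ω = G (I.piecewise w z') ω' := by
  classical
  have ne2 : ∀ a b : VV, a ≠ b → a.1 = b.1 → a.2 = b.2 + 1 := by decide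
  have hsum : ∀ (f : VV → ZMod 2) (x : ι → VV) i v, ∑ j, f (Function.update x i v j) = ∑ j, f (x j) + (f v - f (x i)) := by
    intro f x i v
    rw [← sub_eq_iff_eq_add', ← Finset.sum_sub_distrib, Finset.sum_eq_single i]
    · simp
    · intro j _ hj; simp [hj]
    · simp
  obtain ⟨φ, hφ⟩ : ∃ φ, ∀ x, G x 0 = QQ φ x := by
    refine ⟨fun v => (G (fun i => (v i, 0)) 0).2, fun x => ?_⟩
    have := snd_const (fun x => (G x 0).2 + ∑ i, (x i).2) Finset.univ (by
      intro x i _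
      have h1 := hcol x i 0 (x i + (0,1)) (by generalize x i = a; revert a; decide)
      have h2 := ne2 _ _ h1 (by rw [hL, hL, hsum (fun v => v.1)]; simp)
      rw [h2, hsum (fun v => v.2)]
      simp only [Prod.snd_add]
      have := z2add 1
      linear_combination this) x (fun i => ((x i).1, 0)) rfl (by simp)
    simp only [Finset.sum_const_zero, add_zero] at this
    refine Prod.ext (by rw [hL]; rfl) ?_
    change (G x 0).2 = ∑ i, (x i).2 + (G (fun i => ((x i).1, 0)) 0).2
    rw [← this]
    have := z2add (∑ i, (x i).2)
    linear_combination -this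
  have hst : ∀ x, ∃ t, ∀ w, G x w - G x 0 = st t w := by
    intro x
    exact st_exists (fun w => G x w - G x 0) (by simp) (fun a b h => hrow x (sub_left_injective h))
  choose s hs using hst
  have hG : G = GG φ s := by
    ext x w : 2
    rw [GG, ← hs, ← hφ]; abel
  have hS : Sys_s5 φ s := by
    intro x i u hu w h
    have := hcol x i w (x i + (u.1, u.2 + u.1 * dphi φ i (pr x))) (by
      intro h
      have h := add_eq_left.1 h
      have h1 := congrArg Prod.fst h
      have h2 := congrArg Prod.snd h
      simp only [Prod.fst_zero, Prod.snd_zero] at h1 h2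
      rw [h1, zero_mul, add_zero] at h2
      exact hu (Prod.ext h1 h2))
    apply this
    rw [hG]
    change QQ φ (mv φ i u x) + st (s (mv φ i u x)) w = QQ φ x + st (s x) w
    rw [QQ_mv, ← h]
    have k : ∀ a b c : VV, a + b + (c + b) = a + c := by decide
    exact k _ _ _
  set I : Finset ι := Finset.univ.filter (fun i => ∃ x, s (mv φ i (0,1) x) ≠ s x) with hIdef
  have hI : ∀ i, i ∈ I ↔ ∃ x, s (mv φ i (0,1) x) ≠ s x := by simp [hIdef]
  rcases I.eq_empty_or_nonempty with hIe | hIn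
  · left
    rw [hG]
    apply hS.caseA
    intro x i
    by_contra hc
    have := (hI i).2 ⟨x, hc⟩
    simp [hIe] at this
  · by_cases hIu : I = Finset.univ
    · have hess : ∀ i, ∃ x, s (mv φ i (0,1) x) ≠ s x := fun i => (hI i).1 (by simp [hIu])
      have hn := hS.noT1 hess
      obtain ⟨e, he⟩ := hS.oneType hn
      by_cases hd : ∃ i j v, i ≠ j ∧ ddphi φ i j v ≠ 0
      · right; left
        obtain ⟨C, hC, hC'⟩ := Sys_s5.case4b e he hd
        refine ⟨C, hC, fun u w z h z' ω => ?_⟩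
        rw [hφ, hφ] at h
        obtain ⟨h1, h2⟩ := hC' u w z h z'
        rw [hG, GG, GG, h1, h2]
      · left
        push Not at hd
        rw [hG]
        exact hS.case4a e he hd
    · right; right
      refine ⟨I, hIn, hIu, ?_⟩
      rw [hG]
      exact hS.caseB I (fun i hi => (hI i).1 hi) (fun i hi x => by
        by_contra hc; exact hi ((hI i).2 ⟨x, hc⟩))

end core

theorem nq_of_inj {n : ℕ} {f : (Fin n → V4) → V4}
    (h : ∀ a i, Function.Injective (fun x => f (Function.update a i x))) : IsNQuasigroup f := by
  intro a i b
  obtain ⟨x, hx⟩ := (Finite.injective_iff_surjective.1 (h a i)) b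
  exact ⟨x, hx, fun y hy => h a i (hy.trans hx.symm)⟩

theorem nq_inj {n : ℕ} {f : (Fin n → V4) → V4} (hf : IsNQuasigroup f) (a : Fin n → V4) (i : Fin n) :
    Function.Injective (fun x => f (Function.update a i x)) := by
  intro x y h
  exact (hf a i (f (Function.update a i y))).unique h rfl

theorem decomp {N : ℕ} (q : (Fin N → V4) → V4) (hq : IsNQuasigroup q) (C : Finset (Fin N)) (h2 : 2 ≤ C.card)
    (hN : C.card < N) (z0 : Fin N → V4)
    (h : ∀ u w, q (C.piecewise u z0) = q (C.piecewise w z0) → ∀ z, q (C.piecewise u z) = q (C.piecewise w z)) :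
    IsDecomposable q := by
  obtain ⟨m, hm⟩ : ∃ m, m = C.card := ⟨_, rfl⟩
  rw [← hm] at h2 hN
  obtain ⟨σ, hσ⟩ : ∃ σ : Equiv.Perm (Fin N), ∀ j, σ j ∈ C ↔ j.1 < m := by
    have hc : Fintype.card {j : Fin N // j.1 < m} = Fintype.card {j : Fin N // j ∈ C} := by
      rw [Fintype.card_coe, ← hm]
      have : Fintype.card {j : Fin N // j.1 < m} = Fintype.card (Fin m) :=
        Fintype.card_congr ⟨fun j => ⟨j.1.1, j.2⟩, fun j => ⟨⟨j.1, j.2.trans hN⟩, j.2⟩, fun _ => rfl, fun _ => rfl⟩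
      rw [this, Fintype.card_fin]
    obtain ⟨e⟩ := Fintype.card_eq.1 hc
    refine ⟨e.extendSubtype, fun j => ⟨fun hj => ?_, fun hj => e.extendSubtype_mem j hj⟩⟩
    by_contra hc
    exact e.extendSubtype_not_mem j hc hj
  obtain ⟨J, J1, J2⟩ : ∃ J : (Fin m → V4) → (Fin (N - m) → V4) → Fin N → V4,
      (∀ u w (i : Fin m), J u w (σ ⟨i.1, i.2.trans hN⟩) = u i) ∧
      ∀ u w (i : Fin (N - m)), J u w (σ ⟨m + i.1, by omega⟩) = w i := by
    refine ⟨fun u w j => if hj : (σ.symm j).1 < m then u ⟨(σ.symm j).1, hj⟩ else w ⟨(σ.symm j).1 - m, by omega⟩, ?_, ?_⟩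
    · intro u w i; simp
    · intro u w i; simp
  have Jc : ∀ j : Fin N, (∃ i : Fin m, j = σ ⟨i.1, i.2.trans hN⟩) ∨ ∃ i : Fin (N - m), j = σ ⟨m + i.1, by omega⟩ := by
    intro j
    by_cases hj : (σ.symm j).1 < m
    · exact Or.inl ⟨⟨_, hj⟩, by simp⟩
    · refine Or.inr ⟨⟨(σ.symm j).1 - m, by omega⟩, ?_⟩
      rw [← Equiv.symm_apply_eq]
      ext; simp; omega
  have Jx : ∀ x : Fin N → V4, J (fun j => x (σ ⟨j.1, j.2.trans hN⟩)) (fun j => x (σ ⟨m + j.1, by omega⟩)) = x := by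
    intro x
    ext j : 1
    rcases Jc j with ⟨i, rfl⟩ | ⟨i, rfl⟩
    · rw [J1]
    · rw [J2]
  have Ju : ∀ u w i v, J (Function.update u i v) w = Function.update (J u w) (σ ⟨i.1, i.2.trans hN⟩) v := by
    intro u w i v
    ext j : 1
    rcases Jc j with ⟨i', rfl⟩ | ⟨i', rfl⟩
    · rw [J1]
      by_cases hi : i' = i
      · subst hi; simp
      · have : σ ⟨i'.1, i'.2.trans hN⟩ ≠ σ ⟨i.1, i.2.trans hN⟩ := by
          intro h; exact hi (by simpa [Fin.ext_iff] using h)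
        rw [Function.update_of_ne hi, Function.update_of_ne this, J1]
    · have : σ ⟨m + i'.1, by omega⟩ ≠ σ ⟨i.1, i.2.trans hN⟩ := by
        intro h; have := σ.injective h; simp only [Fin.mk.injEq] at this; omega
      rw [Function.update_of_ne this, J2, J2]
  have Jw : ∀ u w i v, J u (Function.update w i v) = Function.update (J u w) (σ ⟨m + i.1, by omega⟩) v := by
    intro u w i v
    ext j : 1
    rcases Jc j with ⟨i', rfl⟩ | ⟨i', rfl⟩
    · have : σ ⟨i'.1, i'.2.trans hN⟩ ≠ σ ⟨m + i.1, by omega⟩ := by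
        intro h; have := σ.injective h; simp only [Fin.mk.injEq] at this; omega
      rw [Function.update_of_ne this, J1, J1]
    · rw [J2]
      by_cases hi : i' = i
      · subst hi; simp
      · have : σ ⟨m + i'.1, by omega⟩ ≠ σ ⟨m + i.1, by omega⟩ := by
          intro h; exact hi (by simpa [Fin.ext_iff] using h)
        rw [Function.update_of_ne hi, Function.update_of_ne this, J2]
  have Jp : ∀ u u' w, C.piecewise (J u w) (J u' w) = J u w := by
    intro u u' w
    ext j : 1
    rcases Jc j with ⟨i', rfl⟩ | ⟨i', rfl⟩
    · rw [Finset.piecewise_eq_of_mem _ _ _ ((hσ _).2 i'.2)]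
    · rw [Finset.piecewise_eq_of_notMem _ _ _ (fun hc => by have := (hσ _).1 hc; simp at this), J2, J2]
  have Jp2 : ∀ u w z, C.piecewise (J u w) z = J u (fun j => z (σ ⟨m + j.1, by omega⟩)) := by
    intro u w z
    ext j : 1
    rcases Jc j with ⟨i', rfl⟩ | ⟨i', rfl⟩
    · rw [Finset.piecewise_eq_of_mem _ _ _ ((hσ _).2 i'.2), J1, J1]
    · rw [Finset.piecewise_eq_of_notMem _ _ _ (fun hc => by have := (hσ _).1 hc; simp at this), J2]
  set w0 : Fin (N - m) → V4 := fun j => z0 (σ ⟨m + j.1, by omega⟩) with hw0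
  have key : ∀ u u', q (J u w0) = q (J u' w0) → ∀ w, q (J u w) = q (J u' w) := by
    intro u u' hu w
    have := h (J u w) (J u' w) (by rw [Jp2, Jp2]; exact hu) (J u w)
    rw [Jp2, Jp2] at this
    simpa only [J2] using this
  have hg : IsNQuasigroup (fun u => q (J u w0)) := by
    apply nq_of_inj
    intro a i
    simp only [Ju]
    exact nq_inj hq _ _
  let i0 : Fin m := ⟨0, by omega⟩
  let u0 : Fin m → V4 := fun _ => 0
  choose U hU hU' using fun t => hg u0 i0 t
  refine ⟨m, h2, hN, fun v => q (J (Function.update u0 i0 (U (v 0))) (Fin.tail v)), fun u => q (J u w0), σ, ?_, hg, ?_⟩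
  · apply nq_of_inj
    intro a i
    refine Fin.cases ?_ (fun i => ?_) i
    · intro x y hxy
      simp only [Function.update_self, Fin.tail_update_zero, Ju] at hxy
      have := nq_inj hq _ _ hxy
      rw [← hU x, ← hU y, this]
    · have : ∀ x, Function.update a i.succ x 0 = a 0 := fun x => Function.update_of_ne (Fin.succ_ne_zero i).symm _ _
      simp only [this, Fin.tail_update_succ, Jw]
      exact nq_inj hq _ _
  · intro x
    simp only [Fin.cons_zero, Fin.tail_cons]
    conv_lhs => rw [← Jx x]
    exact (key _ _ (hU _) _).symm

theorem exE : ∀ T : Finset (Fin 4), T.card = 2 → ∃ E : Fin 4 ≃ VV, ∀ x, (E x).1 = if x ∈ T then 1 else 0 := by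
  decide +kernel

theorem bal_equiv (f : VV → ZMod 2) (hf : Bal f) (e : Fin 4 ≃ VV) :
    (Finset.univ.filter (fun y => f (e y) = 1)).card = 2 := by
  exact (Finset.card_equiv e (fun i => by simp)).trans hf

theorem semilinear_layer_aux (n : ℕ) (q : (Fin (n + 1) → V4) → V4) (hq : IsNQuasigroup q) (α : V4)
    (hlayerSL : IsSemilinear (fun x : Fin n → V4 => q (Fin.snoc x α))) :
    IsSemilinear q ∨ IsDecomposable q := by
  classical
  obtain ⟨a, b, hab, T, hT, hS⟩ := hlayerSL
  choose E hE using fun i => exE (T i) (hT i)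
  obtain ⟨F, hF⟩ := exE {a, b} (Finset.card_pair hab)
  obtain ⟨W, hW⟩ : ∃ W : VV ≃ Fin 4, W 0 = α := by
    obtain ⟨e⟩ : Nonempty (VV ≃ Fin 4) := Fintype.card_eq.1 (by decide)
    exact ⟨e.trans (Equiv.swap (e 0) α), by simp⟩
  set G : (Fin n → VV) → VV → VV := fun x ω => F (q (Fin.snoc (fun i => (E i).symm (x i)) (W ω))) with hG
  have hqG : ∀ Y, F (q Y) = G (fun i => E i (Y i.castSucc)) (W.symm (Y (Fin.last n))) := by
    intro Y
    simp only [hG, Equiv.symm_apply_apply, Equiv.apply_symm_apply]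
    congr 2
    exact (Fin.snoc_init_self Y).symm
  have hrow : ∀ x, Function.Injective (G x) := by
    intro x ω ω' h
    have h := F.injective h
    rw [← Fin.update_snoc_last (α := fun _ => V4) α _ (W ω), ← Fin.update_snoc_last (α := fun _ => V4) α _ (W ω')] at h
    exact W.injective (nq_inj hq _ _ h)
  have hcol : ∀ x i ω v, v ≠ x i → G (Function.update x i v) ω ≠ G x ω := by
    intro x i ω v hv h
    have h := F.injective h
    have e : (fun j => (E j).symm (Function.update x i v j)) = Function.update (fun j => (E j).symm (x j)) i ((E i).symm v) := by
      ext j : 1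
      by_cases hj : j = i
      · subst hj; simp
      · simp [hj]
    rw [e, Fin.snoc_update] at h
    set X : Fin (n+1) → V4 := Fin.snoc (fun j => (E j).symm (x j)) (W ω) with hX
    have h3 : X = Function.update X i.castSucc ((E i).symm (x i)) := by
      rw [eq_comm, Function.update_eq_self_iff, hX, Fin.snoc_castSucc]
    have h4 : q (Function.update X i.castSucc ((E i).symm v)) = q (Function.update X i.castSucc ((E i).symm (x i))) := by
      rw [← h3]; exact h
    exact hv ((E i).symm.injective (nq_inj hq _ _ h4))
  have hL : ∀ x, (G x 0).1 = ∑ i, (x i).1 := by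
    intro x
    have := hS (fun i => (E i).symm (x i))
    simp only [SCode, Set.mem_ofPred_eq] at this
    have e : ∀ i, (x i).1 = if (E i).symm (x i) ∈ T i then 1 else 0 := by
      intro i; rw [← hE, Equiv.apply_symm_apply]
    simp only [hG, hF, hW, e, Finset.mem_insert, Finset.mem_singleton, this]
    split_ifs with h
    · exact h.symm
    · exact ((z2 _).resolve_right h).symm
  rcases core_thm G hrow hcol hL with h | ⟨C, hC, h⟩ | ⟨I, hI, hI', h⟩
  · left
    obtain ⟨lam, li, l0, b1, b2, b3, h⟩ := h
    obtain ⟨a', b', hab', hl⟩ := Finset.card_eq_two.1 (bal_equiv lam b1 F)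
    refine ⟨a', b', hab', Fin.snoc (α := fun _ => Finset V4) (fun i => Finset.univ.filter (fun y => li i (E i y) = 1))
      (Finset.univ.filter (fun y => l0 (W.symm y) = 1)), ?_, ?_⟩
    · intro i
      refine Fin.lastCases ?_ (fun i => ?_) i
      · rw [Fin.snoc_last]; exact bal_equiv l0 b3 W.symm
      · rw [Fin.snoc_castSucc]; exact bal_equiv _ (b2 i) (E i)
    · intro Y
      have k : ∀ c : ZMod 2, (if c = 1 then 1 else 0) = c := by decide
      rw [Fin.sum_univ_castSucc]
      simp only [Fin.snoc_last, Fin.snoc_castSucc, Finset.mem_filter, Finset.mem_univ, true_and, k]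
      rw [← h (fun i => E i (Y i.castSucc)) (W.symm (Y (Fin.last n))), ← hqG]
      have := Finset.ext_iff.1 hl (q Y)
      simp only [Finset.mem_filter, Finset.mem_univ, true_and, Finset.mem_insert, Finset.mem_singleton] at this
      exact this.symm
  · right
    have hc : (C.map Fin.castSuccEmb).card = C.card := Finset.card_map _
    have e1 : ∀ U Z : Fin (n+1) → V4, (fun i => E i ((C.map Fin.castSuccEmb).piecewise U Z i.castSucc)) =
        C.piecewise (fun i => E i (U i.castSucc)) (fun i => E i (Z i.castSucc)) := by
      intro U Z
      ext i : 1
      by_cases hi : i ∈ C <;> simp [hi, Finset.piecewise]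
    have e2 : ∀ U Z : Fin (n+1) → V4, (C.map Fin.castSuccEmb).piecewise U Z (Fin.last n) = Z (Fin.last n) := by
      intro U Z
      simp [Finset.piecewise]
    refine decomp q hq (C.map Fin.castSuccEmb) (by omega) ?_ (fun _ => α) ?_
    · have := C.card_le_univ; rw [Fintype.card_fin] at this; omega
    · intro u w huw z
      have huw := congrArg F huw
      apply F.injective
      rw [hqG, hqG, e1, e1, e2, e2] at huw ⊢
      rw [show W.symm α = 0 by rw [← hW]; simp] at huw
      exact h _ _ _ huw _ _
  · right
    have hlast : Fin.last n ∉ I.map Fin.castSuccEmb := by simp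
    set D := insert (Fin.last n) (I.map Fin.castSuccEmb) with hD
    have hc : D.card = I.card + 1 := by rw [hD, Finset.card_insert_of_notMem hlast, Finset.card_map]
    have e1 : ∀ U Z : Fin (n+1) → V4, (fun i => E i (D.piecewise U Z i.castSucc)) =
        I.piecewise (fun i => E i (U i.castSucc)) (fun i => E i (Z i.castSucc)) := by
      intro U Z
      ext i : 1
      by_cases hi : i ∈ I <;> simp [hi, Finset.piecewise, hD]
    have e2 : ∀ U Z : Fin (n+1) → V4, D.piecewise U Z (Fin.last n) = U (Fin.last n) := by
      intro U Z
      simp [hD]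
    have hp := hI.card_pos
    have hlt : I.card < n := by
      have := (Finset.card_lt_iff_ne_univ I).2 hI'
      simpa using this
    refine decomp q hq D (by omega) (by omega) (fun _ => α) ?_
    intro u w huw z
    have huw := congrArg F huw
    apply F.injective
    rw [hqG, hqG, e1, e1, e2, e2] at huw ⊢
    exact h _ _ _ _ _ _ huw

/-- Lemma 4 (on a semilinear layer): if an `(n+1)`-quasigroup `q` (with
`n + 1 ≥ 3`) has a layer `q_α` that is a semilinear `n`-quasigroup, then `q`
is semilinear or decomposable. -/
theorem semilinear_layer (n : ℕ) (hn : 3 ≤ n + 1)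
    (q : (Fin (n + 1) → V4) → V4) (hq : IsNQuasigroup q) (α : V4)
    (hlayerQ : IsNQuasigroup (fun x : Fin n → V4 => q (Fin.snoc x α)))
    (hlayerSL : IsSemilinear (fun x : Fin n → V4 => q (Fin.snoc x α))) :
    IsSemilinear q ∨ IsDecomposable q := by
  exact semilinear_layer_aux n q hq α hlayerSL
end
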